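/- Let n ≥ 2 be an integer, F and G division rings, and φ : F → Mₙ(G) a 1-tight ring embedding. Then there exist division rings F′ and G′, ring embeddings ι_F : F → F′, ι_G : G → G′, and a ring embedding φ′ : F′ → Mₙ(G′) with φ′(ι_F(f)) equal to φ(f) with ι_G applied entrywise for all f ∈ F, such that φ′ is both 1-tight and 2-tight. -/

import Mathlib

/-- `φ : F → Mₙ(α)` is `a`-tight: every possible upper-right `a × (n+1-a)` block
(rows `1,…,a`, columns `a,…,n`, one-indexed) is realized by some element of `F`. -/
def ATight {n : ℕ} {F α : Type*} (φ : F → Matrix (Fin n) (Fin n) α) (a : ℕ) : Prop :=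
  ∀ g : Matrix (Fin n) (Fin n) α, ∃ x : F, ∀ i j : Fin n,
    (i : ℕ) < a → a ≤ (j : ℕ) + 1 → φ x i j = g i j

/-- An extension of the embedding `φ : F → Mₙ(G)` along division ring embeddings
`F → F′` and `G → G′` to an embedding `φ′ : F′ → Mₙ(G′)`. -/
structure EmbExtension (n : ℕ) (F G : Type) [DivisionRing F] [DivisionRing G]
    (φ : F →+* Matrix (Fin n) (Fin n) G) : Type 1 where
  F' : Type
  G' : Type
  [instF' : DivisionRing F']
  [instG' : DivisionRing G']
  ιF : F →+* F'
  ιG : G →+* G'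
  injF : Function.Injective ιF
  injG : Function.Injective ιG
  φ' : F' →+* Matrix (Fin n) (Fin n) G'
  injφ' : Function.Injective φ'
  compat : ∀ x : F, φ' (ιF x) = (φ x).map ⇑ιG

attribute [instance] EmbExtension.instF' EmbExtension.instG'

/-!
Through its first rows, a `1`-tight `φ` turns `F` into a left `G`-space with a basis
`x₀ = 1, x₁, …, xₙ₋₁` for which `φ f` is the matrix of right multiplication by `f`. Such a
representation is `2`-tight as soon as `F = G + x₁ G`. So it is enough to enlarge `F ⊇ G`, keeping
the family `x` left independent over `G`, until `x` spans `F` and `F = G + x₁ G`; a countable direct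
limit reduces this to catering for the elements of the original `F` only.

Each enlargement adjoins to a division ring `E ⊇ G` indeterminates `V_j` that are only required to
commute with `G`. The resulting ring `E_G⟨V⟩` is a Sylvester domain, hence has a universal division
ring `Q` of fractions in which every full matrix becomes invertible and to which every automorphism
extends. This `Q` is the new `F`, the old one being embedded through a conjugation with `V₀`, and
the new scalars are the elements of `Q` fixed by certain automorphisms over `E`. A linear system
over `Q` with full matrix has a unique solution; when the automorphisms only recombine its equations
they fix the solution, whose entries are thus new scalars. For spanning, the automorphisms permute
the `V_j`; for `F = G + x₁ G`, they are the shears `V₀ ↦ V₀ + c V₁` with `c` a power of a central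
Laurent variable.
-/

open Matrix

universe u

section InnerRank

variable {R S : Type*} [Ring R] [Ring S] {m n p κ μ ρ τ : Type*}

/-- The inner rank of `A` is at most `r`. The inner rank itself is the least such `r`. -/
def InnerRankLE (A : Matrix m n R) (r : ℕ) : Prop :=
  ∃ (X : Matrix m (Fin r) R) (Y : Matrix (Fin r) n R), A = X * Y

/-- A square matrix over a ring is full if its inner rank is its size, that is, if it does not
factor through a smaller size. -/
def IsFull [Fintype κ] (A : Matrix κ κ R) : Prop :=
  ∀ r, InnerRankLE A r → Fintype.card κ ≤ r

/-- Sylvester domains in the sense of Dicks and Sontag: the nonzero rings whose matrices satisfy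
Sylvester's law of nullity for the inner rank. -/
class IsSylvesterDomain (R : Type*) [Ring R] : Prop extends Nontrivial R where
  law_of_nullity {m n p : ℕ} (X : Matrix (Fin m) (Fin n) R) (Y : Matrix (Fin n) (Fin p) R) :
    X * Y = 0 → ∃ r s, r + s ≤ n ∧ InnerRankLE X r ∧ InnerRankLE Y s

namespace InnerRankLE

variable {A : Matrix m n R} {r : ℕ}

theorem mul [Fintype ρ] (X : Matrix m ρ R) (Y : Matrix ρ n R) (hr : Fintype.card ρ ≤ r) :
    InnerRankLE (X * Y) r := by
  let e : ρ ⊕ Fin (r - Fintype.card ρ) ≃ Fin r := Fintype.equivFinOfCardEq (by simp [hr])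
  refine ⟨(fromCols X 0).submatrix id e.symm, (fromRows Y 0).submatrix e.symm id, ?_⟩
  rw [submatrix_mul_equiv, fromCols_mul_fromRows]
  simp

theorem mul_left [Fintype m] (h : InnerRankLE A r) (Z : Matrix p m R) : InnerRankLE (Z * A) r := by
  obtain ⟨X, Y, rfl⟩ := h
  exact ⟨Z * X, Y, (Matrix.mul_assoc ..).symm⟩

theorem mul_right [Fintype n] (h : InnerRankLE A r) (Z : Matrix n p R) :
    InnerRankLE (A * Z) r := by
  obtain ⟨X, Y, rfl⟩ := h
  exact ⟨X, Y * Z, Matrix.mul_assoc ..⟩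

theorem submatrix (h : InnerRankLE A r) (e : p → m) (f : τ → n) :
    InnerRankLE (A.submatrix e f) r := by
  obtain ⟨X, Y, rfl⟩ := h
  exact ⟨X.submatrix e id, Y.submatrix id f, rfl⟩

theorem map (h : InnerRankLE A r) (f : R →+* S) : InnerRankLE (A.map f) r := by
  obtain ⟨X, Y, rfl⟩ := h
  exact ⟨X.map f, Y.map f, Matrix.map_mul⟩

theorem of_submatrix_equiv {A : Matrix m n R} (e : p ≃ m) (f : τ ≃ n)
    (h : InnerRankLE (A.submatrix e f) r) : InnerRankLE A r := by
  simpa using h.submatrix e.symm f.symm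

theorem of_col_eq_zero [Fintype n] {q : n → Prop} [DecidablePred q]
    (h : ∀ a i, ¬ q i → A a i = 0) : InnerRankLE A (Fintype.card {i // q i}) := by
  classical
  convert InnerRankLE.mul (A.submatrix id (Subtype.val : {i // q i} → n))
    ((1 : Matrix n n R).submatrix Subtype.val id) le_rfl
  ext a j
  rw [← congrFun (congrFun (Matrix.mul_one A) a) j, mul_apply,
    ← Fintype.sum_subtype_add_sum_subtype q,
    Fintype.sum_eq_zero _ fun i : {i // ¬ q i} => by rw [h a i i.2, zero_mul], add_zero]
  rfl

theorem of_row_eq_zero [Fintype m] {q : m → Prop} [DecidablePred q]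
    (h : ∀ i b, ¬ q i → A i b = 0) : InnerRankLE A (Fintype.card {i // q i}) := by
  classical
  convert InnerRankLE.mul ((1 : Matrix m m R).submatrix id Subtype.val)
    (A.submatrix (Subtype.val : {i // q i} → m) id) le_rfl
  ext i b
  rw [← congrFun (congrFun (Matrix.one_mul A) i) b, mul_apply,
    ← Fintype.sum_subtype_add_sum_subtype q,
    Fintype.sum_eq_zero _ fun i : {i // ¬ q i} => by rw [h i b i.2, mul_zero], add_zero]
  rfl

end InnerRankLE

theorem innerRankLE_fromBlocks_iff {A : Matrix m n R} {b : Matrix m p R} {F : Matrix τ n R}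
    {d : Matrix τ p R} {r : ℕ} :
    InnerRankLE (fromBlocks A b F d) r ↔
      ∃ (P : Matrix m (Fin r) R) (H : Matrix τ (Fin r) R) (U : Matrix (Fin r) n R)
        (β : Matrix (Fin r) p R), A = P * U ∧ b = P * β ∧ F = H * U ∧ d = H * β := by
  constructor
  · rintro ⟨X, Y, h⟩
    rw [← fromRows_toRows X, ← fromCols_toCols Y, fromRows_mul_fromCols, fromBlocks_inj] at h
    exact ⟨_, _, _, _, h⟩
  · rintro ⟨P, H, U, β, rfl, rfl, rfl, rfl⟩
    exact ⟨fromRows P H, fromCols U β, (fromRows_mul_fromCols ..).symm⟩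

theorem IsSylvesterDomain.exists_innerRankLE [IsSylvesterDomain R] [Finite m] [Fintype n]
    [Finite p] {X : Matrix m n R} {Y : Matrix n p R} (h : X * Y = 0) :
    ∃ r s, r + s ≤ Fintype.card n ∧ InnerRankLE X r ∧ InnerRankLE Y s := by
  cases nonempty_fintype m
  cases nonempty_fintype p
  have h' : X.submatrix (Fintype.equivFin m).symm (Fintype.equivFin n).symm *
      Y.submatrix (Fintype.equivFin n).symm (Fintype.equivFin p).symm = 0 := by
    rw [submatrix_mul_equiv, h, submatrix_zero]
    rfl
  obtain ⟨r, s, hrs, hX, hY⟩ := law_of_nullity _ _ h'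
  exact ⟨r, s, hrs, hX.of_submatrix_equiv, hY.of_submatrix_equiv⟩

namespace IsFull

variable [Fintype κ] [Fintype μ] {A : Matrix κ κ R}

theorem reindex (hA : IsFull A) (e f : μ ≃ κ) : IsFull (A.submatrix e f) := fun r h =>
  (Fintype.card_congr e).trans_le (hA r h.of_submatrix_equiv)

theorem of_reindex (e f : μ ≃ κ) (hA : IsFull (A.submatrix e f)) : IsFull A := by
  simpa using hA.reindex e.symm f.symm

theorem of_map (f : R →+* S) (h : IsFull (A.map f)) : IsFull A := fun r hr => h r (hr.map f)

theorem map_equiv (hA : IsFull A) (e : R ≃+* S) : IsFull (A.map e) := by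
  apply of_map (e.symm : S →+* R)
  convert hA
  ext
  simp

theorem of_mul_right {P U : Matrix κ κ R} (h : IsFull (P * U)) : IsFull P := fun r hr =>
  h r (hr.mul_right U)

section Sylvester

variable [IsSylvesterDomain R] [Fintype ρ] [Finite p] {P : Matrix κ ρ R} {U : Matrix ρ κ R}

theorem eq_zero_of_mul_left_eq_zero (hPU : IsFull (P * U))
    (hρ : Fintype.card ρ ≤ Fintype.card κ) {Y : Matrix p ρ R} (hY : Y * U = 0) : Y = 0 := by
  obtain ⟨r, s, hrs, ⟨K, L, rfl⟩, hU⟩ := IsSylvesterDomain.exists_innerRankLE hY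
  have hs := hPU s (hU.mul_left P)
  obtain rfl : r = 0 := by omega
  ext
  simp [Matrix.mul_apply]

theorem fromBlocks_zero {B : Matrix μ μ R} (hA : IsFull A) (hB : IsFull B) (C : Matrix κ μ R) :
    IsFull (fromBlocks A C 0 B) := by
  intro r h
  obtain ⟨P, H, U, β, rfl, rfl, hHU, rfl⟩ := innerRankLE_fromBlocks_iff.1 h
  obtain ⟨s, t, hst, hH, hU⟩ := IsSylvesterDomain.exists_innerRankLE hHU.symm
  have hs := hB s (hH.mul_right β)
  have ht := hA t (hU.mul_left P)
  rw [Fintype.card_fin] at hst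
  rw [Fintype.card_sum]
  omega

end Sylvester

end IsFull

variable (R κ) in
theorem isFull_one [Nontrivial R] [Unique κ] [DecidableEq κ] [Fintype κ] :
    IsFull (1 : Matrix κ κ R) := by
  intro r h
  obtain ⟨X, Y, h⟩ := h
  rw [Fintype.card_unique, Nat.one_le_iff_ne_zero]
  rintro rfl
  simpa [Matrix.mul_apply] using congrFun (congrFun h default) default

theorem isFull_of_isEmpty [IsEmpty κ] [Fintype κ] (A : Matrix κ κ R) : IsFull A := fun r _ => by
  simp

end InnerRank

section FormalValue

variable {R : Type*} [Ring R] {κ μ ρ σ τ τ' p : Type*} [Fintype κ]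

/-- The equation `F A⁻¹ b = d`, expressed over `R` itself by a factorization of the block matrix
`[A b; F d]` through the size of `A`; it is meant for full `A`. -/
def HasFormalValue (A : Matrix κ κ R) (b : Matrix κ p R) (F : Matrix τ κ R)
    (d : Matrix τ p R) : Prop :=
  InnerRankLE (fromBlocks A b F d) (Fintype.card κ)

namespace HasFormalValue

variable {A : Matrix κ κ R} {b : Matrix κ p R} {F : Matrix τ κ R} {d : Matrix τ p R}

theorem of_mul [Fintype ρ] (P : Matrix κ ρ R) (H : Matrix τ ρ R) (U : Matrix ρ κ R)
    (β : Matrix ρ p R) (hρ : Fintype.card ρ ≤ Fintype.card κ) :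
    HasFormalValue (P * U) (P * β) (H * U) (H * β) := by
  rw [HasFormalValue, ← fromRows_mul_fromCols]
  exact .mul _ _ hρ

theorem self (A : Matrix κ κ R) (b : Matrix κ p R) : HasFormalValue A b A b := by
  classical
  simpa only [Matrix.one_mul] using of_mul (1 : Matrix κ κ R) (1 : Matrix κ κ R) A b le_rfl

theorem mul_left [Fintype τ] (h : HasFormalValue A b F d) (Z : Matrix σ τ R) :
    HasFormalValue A b (Z * F) (Z * d) := by
  obtain ⟨P, H, U, β, rfl, rfl, rfl, rfl⟩ := innerRankLE_fromBlocks_iff.1 h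
  exact innerRankLE_fromBlocks_iff.2
    ⟨P, Z * H, U, β, rfl, rfl, (Matrix.mul_assoc ..).symm, (Matrix.mul_assoc ..).symm⟩

theorem submatrix (h : HasFormalValue A b F d) (s : τ' → τ) :
    HasFormalValue A b (F.submatrix s id) (d.submatrix s id) := by
  rw [HasFormalValue]
  convert InnerRankLE.submatrix h (Sum.map id s) id using 1
  ext (i | i) (j | j) <;> rfl

theorem reindex [Fintype μ] (h : HasFormalValue A b F d) (e : μ ≃ κ) :
    HasFormalValue (A.submatrix e e) (b.submatrix e id) (F.submatrix id e) d := by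
  rw [HasFormalValue, Fintype.card_congr e]
  convert InnerRankLE.submatrix h (Sum.map e id) (Sum.map e id) using 1
  ext (i | i) (j | j) <;> rfl

theorem enlarge [Fintype μ] (h : HasFormalValue A b F d) (A' : Matrix μ μ R)
    (b' : Matrix μ p R) :
    HasFormalValue (fromBlocks A 0 0 A') (fromRows b b') (fromCols F 0) d := by
  classical
  obtain ⟨P, H, U, β, rfl, rfl, rfl, rfl⟩ := innerRankLE_fromBlocks_iff.1 h
  convert of_mul (fromBlocks P 0 0 (1 : Matrix μ μ R)) (fromCols H 0) (fromBlocks U 0 0 A')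
    (fromRows β b') (by simp) using 1 <;>
  simp [fromBlocks_multiply, fromBlocks_mul_fromRows, fromCols_mul_fromBlocks,
    fromCols_mul_fromRows]

section Sylvester

variable [IsSylvesterDomain R]

theorem eq_zero [Finite τ] (hA : IsFull A) (h : HasFormalValue A b 0 d) : d = 0 := by
  obtain ⟨P, H, U, β, rfl, rfl, hHU, rfl⟩ := innerRankLE_fromBlocks_iff.1 h
  rw [hA.eq_zero_of_mul_left_eq_zero (by simp) hHU.symm, Matrix.zero_mul]

variable [Finite p]

theorem append_rows {F' : Matrix τ' κ R} {d' : Matrix τ' p R} (hA : IsFull A)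
    (h : HasFormalValue A b F d) (h' : HasFormalValue A b F' d') :
    HasFormalValue A b (fromRows F F') (fromRows d d') := by
  obtain ⟨P, H, U, β, rfl, rfl, rfl, rfl⟩ := innerRankLE_fromBlocks_iff.1 h
  obtain ⟨P', H', U', β', hPU, hPβ, rfl, rfl⟩ := innerRankLE_fromBlocks_iff.1 h'
  have hrel : fromCols P (-P') * fromBlocks U β U' β' = 0 := by
    rw [fromCols_mul_fromBlocks, Matrix.neg_mul, Matrix.neg_mul, hPU, hPβ]
    simp
  obtain ⟨r, s, hrs, ⟨X, Y, hX⟩, hUβ⟩ := IsSylvesterDomain.exists_innerRankLE hrel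
  obtain ⟨K, K', L, γ, rfl, rfl, rfl, rfl⟩ := innerRankLE_fromBlocks_iff.1 hUβ
  have hr : Fintype.card κ ≤ r := by
    refine hA r ⟨X, Y.toCols₁ * (K * L), ?_⟩
    rw [← fromCols_toCols Y, mul_fromCols, fromCols_ext_iff] at hX
    rw [hX.1, Matrix.mul_assoc]
  have hs : Fintype.card (Fin s) ≤ Fintype.card κ := by
    simp only [Fintype.card_sum, Fintype.card_fin] at hrs ⊢
    omega
  convert of_mul (P * K) (fromRows (H * K) (H' * K')) L γ hs using 1 <;>
  simp only [fromRows_mul, Matrix.mul_assoc]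

theorem of_isFull_mul [Fintype σ] {C : Matrix σ σ R} (hC : IsFull C) {F : Matrix σ κ R}
    {d : Matrix σ p R} (h : HasFormalValue A b (C * F) (C * d)) : HasFormalValue A b F d := by
  obtain ⟨P, H, U, β, rfl, rfl, hF, hd⟩ := innerRankLE_fromBlocks_iff.1 h
  have hrel : fromCols C (-H) * fromBlocks F d U β = 0 := by
    rw [fromCols_mul_fromBlocks, Matrix.neg_mul, Matrix.neg_mul, hF, hd]
    simp
  obtain ⟨r, s, hrs, ⟨X, Y, hX⟩, hFd⟩ := IsSylvesterDomain.exists_innerRankLE hrel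
  obtain ⟨K, K', L, γ, rfl, rfl, rfl, rfl⟩ := innerRankLE_fromBlocks_iff.1 hFd
  have hr : Fintype.card σ ≤ r := by
    rw [← fromCols_toCols Y, mul_fromCols, fromCols_ext_iff] at hX
    exact hC r ⟨X, Y.toCols₁, hX.1⟩
  have hs : Fintype.card (Fin s) ≤ Fintype.card κ := by
    simp only [Fintype.card_sum, Fintype.card_fin] at hrs ⊢
    omega
  convert of_mul (P * K') K L γ hs using 1 <;>
  simp only [Matrix.mul_assoc]

theorem of_forall [Finite τ] (hA : IsFull A)
    (h : ∀ t, HasFormalValue A b (F.submatrix (fun _ : Unit => t) id)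
      (d.submatrix (fun _ : Unit => t) id)) : HasFormalValue A b F d := by
  classical
  induction τ using Finite.induction_empty_option with
  | of_equiv e ih =>
    have := ih (F := F.submatrix e id) (d := d.submatrix e id) fun t => h (e t)
    simpa using this.submatrix e.symm
  | h_empty =>
    have := (self A b).mul_left (0 : Matrix PEmpty κ R)
    rwa [Subsingleton.elim (0 * A) F, Subsingleton.elim (0 * b) d] at this
  | h_option ih =>
    have hsome := ih (F := F.submatrix some id) (d := d.submatrix some id) fun t => h (some t)
    convert ((hsome.append_rows hA (h none)).submatrix (Equiv.optionEquivSumPUnit _)) using 1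
    all_goals
      ext (_ | i) j <;> rfl

end Sylvester

end HasFormalValue

end FormalValue

section UniversalModule

/-- A square linear system `A x = b` over a ring whose coefficient matrix `A` is full. -/
structure FullSystem (R : Type*) [Ring R] where
  size : ℕ
  mat : Matrix (Fin size) (Fin size) R
  rhs : Fin size → R
  isFull_mat : IsFull mat

namespace FullSystem

variable {R : Type*} [Ring R] {σ τ : Type*}

variable (R) in
/-- One unknown for each coordinate of each full system over `R`. -/
abbrev Unknown : Type _ := Σ s : FullSystem R, Fin s.size

/-- The unknowns of the systems in `T`. -/
abbrev UnknownOf (T : Finset (FullSystem R)) : Type _ := {p : Unknown R // p.1 ∈ T}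

noncomputable instance (T : Finset (FullSystem R)) : Fintype (UnknownOf T) :=
  Fintype.subtype (T.sigma fun _ => Finset.univ) fun p => by simp

open Classical in
/-- The block diagonal coefficient matrix of the conjunction of the systems in `T`. -/
noncomputable def jointMat (T : Finset (FullSystem R)) : Matrix (UnknownOf T) (UnknownOf T) R :=
  (blockDiagonal' FullSystem.mat).submatrix (↑) (↑)

/-- The right hand side of the conjunction of the systems in `T`. -/
def jointRhs (T : Finset (FullSystem R)) (p : UnknownOf T) : R := p.1.1.rhs p.1.2

open Classical in
/-- The unknowns of a disjoint union of sets of systems. -/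
noncomputable def unknownOfUnionEquiv {S T : Finset (FullSystem R)} (h : Disjoint S T) :
    UnknownOf S ⊕ UnknownOf T ≃ UnknownOf (S ∪ T) :=
  ((Equiv.subtypeEquivRight fun _ => Finset.mem_union).trans
    (subtypeOrEquiv _ _ (Pi.disjoint_iff.2 fun p => by
      simpa [Prop.disjoint_iff] using fun hS => Finset.disjoint_left.1 h hS))).symm

theorem jointMat_apply_self (s : FullSystem R) (i j : Fin s.size) {T} (h : s ∈ T) :
    jointMat T ⟨⟨s, i⟩, h⟩ ⟨⟨s, j⟩, h⟩ = s.mat i j := by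
  classical
  exact blockDiagonal'_apply_eq FullSystem.mat s i j

theorem jointMat_apply_of_ne {T : Finset (FullSystem R)} {p q : UnknownOf T} (h : p.1.1 ≠ q.1.1) :
    jointMat T p q = 0 := by
  classical
  exact blockDiagonal'_apply_ne FullSystem.mat _ _ h

open Classical in
theorem jointMat_union {S T : Finset (FullSystem R)} (h : Disjoint S T) :
    (jointMat (S ∪ T)).submatrix (unknownOfUnionEquiv h) (unknownOfUnionEquiv h) =
      fromBlocks (jointMat S) 0 0 (jointMat T) := by
  have hne (p : UnknownOf S) (q : UnknownOf T) : p.1.1 ≠ q.1.1 :=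
    fun hpq => Finset.disjoint_left.1 h p.2 (hpq ▸ q.2)
  ext (p | p) (q | q)
  · rfl
  · exact jointMat_apply_of_ne (hne p q)
  · exact jointMat_apply_of_ne (hne q p).symm
  · rfl

theorem isFull_jointMat_singleton (s : FullSystem R) : IsFull (jointMat {s}) := by
  let e : Fin s.size ≃ UnknownOf {s} :=
    { toFun i := ⟨⟨s, i⟩, Finset.mem_singleton_self s⟩
      invFun p := Fin.cast (by rw [Finset.mem_singleton.1 p.2]) p.1.2
      left_inv _ := rfl
      right_inv := by
        rintro ⟨⟨t, i⟩, ht⟩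
        obtain rfl := Finset.mem_singleton.1 ht
        rfl }
  refine .of_reindex e e ?_
  convert s.isFull_mat
  ext i j
  exact jointMat_apply_self s i j (Finset.mem_singleton_self s)

theorem isFull_jointMat [IsSylvesterDomain R] (T : Finset (FullSystem R)) :
    IsFull (jointMat T) := by
  classical
  induction T using Finset.induction_on with
  | empty =>
    have : IsEmpty (UnknownOf (∅ : Finset (FullSystem R))) := ⟨fun p => by simpa using p.2⟩
    exact isFull_of_isEmpty _
  | insert s T hs ih =>
    have hdisj := Finset.disjoint_singleton_left.2 hs
    rw [Finset.insert_eq]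
    apply IsFull.of_reindex (unknownOfUnionEquiv hdisj) (unknownOfUnionEquiv hdisj)
    rw [jointMat_union]
    exact (isFull_jointMat_singleton s).fromBlocks_zero ih 0

/-- Each member `(d, F)` of the family `w` encodes a relation `∑ F p • p = d • ω` between the
unknowns and a common right hand side `ω`. The family holds in `T` if all of these relations
formally follow from the systems in `T`. -/
def HoldsIn (T : Finset (FullSystem R)) (w : τ → R × (Unknown R →₀ R)) : Prop :=
  (∀ t p, (w t).2 p ≠ 0 → p.1 ∈ T) ∧
    HasFormalValue (jointMat T) (replicateCol Unit (jointRhs T))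
      (of fun t (p : UnknownOf T) => (w t).2 p) (of fun t (_ : Unit) => (w t).1)

namespace HoldsIn

variable {S T : Finset (FullSystem R)} {w : τ → R × (Unknown R →₀ R)}

theorem comp (h : HoldsIn T w) (f : σ → τ) : HoldsIn T (w ∘ f) :=
  ⟨fun t p => h.1 (f t) p, h.2.submatrix f⟩

theorem mono (h : HoldsIn S w) (hST : S ⊆ T) : HoldsIn T w := by
  classical
  refine ⟨fun t p hp => hST (h.1 t p hp), ?_⟩
  have hdisj : Disjoint S (T \ S) := Finset.disjoint_sdiff
  obtain ⟨U, hU, rfl⟩ : ∃ U, Disjoint S U ∧ S ∪ U = T := ⟨T \ S, hdisj, by simp [hST]⟩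
  have h' := (h.2.enlarge (jointMat U) (replicateCol Unit (jointRhs U))).reindex
    (unknownOfUnionEquiv hU).symm
  rw [← jointMat_union hU] at h'
  convert h'
  · simp
  · ext p j
    obtain ⟨p | p, rfl⟩ := (unknownOfUnionEquiv hU).surjective p
    · simp only [replicateCol_apply, submatrix_apply, Equiv.symm_apply_apply, id_eq,
        fromRows_apply_inl]
      rfl
    · simp only [replicateCol_apply, submatrix_apply, Equiv.symm_apply_apply, id_eq,
        fromRows_apply_inr]
      rfl
  · ext t p
    obtain ⟨p | p, rfl⟩ := (unknownOfUnionEquiv hU).surjective p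
    · simp only [of_apply, submatrix_apply, id_eq, Equiv.symm_apply_apply, fromCols_apply_inl]
      rfl
    · suffices (w t).2 p = 0 by simpa
      by_contra hp
      exact Finset.disjoint_left.1 hU (h.1 t p hp) p.2

theorem sum_smul [Fintype τ] (h : HoldsIn T w) (Z : Matrix σ τ R) :
    HoldsIn T fun s => ∑ t, Z s t • w t := by
  refine ⟨fun s p hp => ?_, ?_⟩
  · obtain ⟨t, -, ht⟩ := Finset.exists_ne_zero_of_sum_ne_zero (by simpa [Prod.snd_sum] using hp)
    exact h.1 t p (right_ne_zero_of_mul ht)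
  · convert h.2.mul_left Z using 1 <;> ext <;> simp [Matrix.mul_apply, Prod.fst_sum, Prod.snd_sum]

variable [IsSylvesterDomain R]

theorem of_forall [Finite τ] (h : ∀ t, HoldsIn T fun _ : Unit => w t) : HoldsIn T w :=
  ⟨fun t => (h t).1 (), .of_forall (isFull_jointMat T) fun t => (h t).2⟩

theorem of_sum_smul [Fintype σ] {C : Matrix σ σ R} (hC : IsFull C)
    {w : σ → R × (Unknown R →₀ R)} (hw : ∀ t p, (w t).2 p ≠ 0 → p.1 ∈ T)
    (h : HoldsIn T fun s => ∑ t, C s t • w t) : HoldsIn T w := by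
  refine ⟨hw, HasFormalValue.of_isFull_mul hC ?_⟩
  convert h.2 using 1 <;> ext <;> simp [Matrix.mul_apply, Prod.fst_sum, Prod.snd_sum]

theorem fst_eq_zero {d : R} (h : HoldsIn T fun _ : Unit => (d, 0)) : d = 0 :=
  congrFun (congrFun (h.2.eq_zero (isFull_jointMat T)) ()) ()

end HoldsIn

/-- Relations `∑ F p • p = d • ω`, encoded by pairs `(d, F)`, that formally follow from finitely
many full systems. -/
def IsRelation (w : R × (Unknown R →₀ R)) : Prop :=
  ∃ T : Finset (FullSystem R), HoldsIn T fun _ : Unit => w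

theorem isRelation_row (s : FullSystem R) (i : Fin s.size) :
    IsRelation (s.rhs i, ∑ j, Finsupp.single (⟨s, j⟩ : Unknown R) (s.mat i j)) := by
  classical
  refine ⟨{s}, fun _ p hp => ?_, ?_⟩
  · obtain ⟨j, -, hj⟩ := Finset.exists_ne_zero_of_sum_ne_zero (by simpa using hp)
    simp [(Finsupp.single_apply_ne_zero.1 hj).1]
  · have h := HasFormalValue.self (jointMat {s}) (replicateCol Unit (jointRhs {s}))
    convert h.submatrix fun _ : Unit => ⟨⟨s, i⟩, Finset.mem_singleton_self s⟩ using 1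
    · ext _ ⟨⟨t, j⟩, ht⟩
      obtain rfl := Finset.mem_singleton.1 ht
      simp [Finsupp.single_apply, jointMat_apply_self]
    · rfl

variable [IsSylvesterDomain R]

theorem exists_holdsIn [Finite τ] {w : τ → R × (Unknown R →₀ R)} (h : ∀ t, IsRelation (w t))
    (S : Finset (FullSystem R)) : ∃ T, S ⊆ T ∧ HoldsIn T w := by
  classical
  cases nonempty_fintype τ
  choose T hT using h
  refine ⟨S ∪ Finset.univ.biUnion T, Finset.subset_union_left, .of_forall fun t => ?_⟩
  exact (hT t).mono <|
    (Finset.subset_biUnion_of_mem T (Finset.mem_univ t)).trans Finset.subset_union_right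

theorem IsRelation.sum_smul [Fintype τ] {w : τ → R × (Unknown R →₀ R)}
    (h : ∀ t, IsRelation (w t)) (c : τ → R) : IsRelation (∑ t, c t • w t) := by
  obtain ⟨T, -, hT⟩ := exists_holdsIn h ∅
  exact ⟨T, hT.sum_smul (replicateRow Unit c)⟩

theorem IsRelation.of_sum_smul [Fintype σ] {C : Matrix σ σ R} (hC : IsFull C)
    {w : σ → R × (Unknown R →₀ R)} (h : ∀ s, IsRelation (∑ t, C s t • w t)) (s : σ) :
    IsRelation (w s) := by
  classical
  obtain ⟨T, hST, hT⟩ := exists_holdsIn h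
    (Finset.univ.biUnion fun t => (w t).2.support.image Sigma.fst)
  refine ⟨T, (HoldsIn.of_sum_smul hC (fun t p hp => hST ?_) hT).comp fun _ => s⟩
  simp only [Finset.mem_biUnion, Finset.mem_image, Finsupp.mem_support_iff]
  exact ⟨t, Finset.mem_univ t, p, hp, rfl⟩

variable (R) in
/-- The formal consequences of the full systems over `R`. -/
def relations : Submodule R (R × (Unknown R →₀ R)) where
  carrier := {w | IsRelation w}
  zero_mem' := by simpa using IsRelation.sum_smul (τ := Fin 0) (w := 0) nofun 0
  add_mem' := fun {v w} hv hw => by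
    simpa using IsRelation.sum_smul (τ := Fin 2) (w := ![v, w]) (Fin.forall_fin_two.2 ⟨hv, hw⟩) 1
  smul_mem' := fun c w hw => by
    simpa using IsRelation.sum_smul (τ := Unit) (w := fun _ => w) (by simpa using hw) fun _ => c

variable (R) in
/-- The left `R`-module presented by a generator `ω` and the unknowns of all full systems
`A x = b`, subject to the consequences of the relations `A x = b ω`. -/
abbrev SolutionModule : Type _ := (R × (Unknown R →₀ R)) ⧸ relations R

/-- The class of an unknown. -/
noncomputable def solution (p : Unknown R) : SolutionModule R :=
  (relations R).mkQ (0, Finsupp.single p 1)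

variable (R) in
/-- The common right hand side of the systems. The relation `∑ F p • p = d • ω` is encoded as
`(d, F)`, which accounts for the sign. -/
noncomputable def omega : SolutionModule R := (relations R).mkQ (-1, 0)

theorem mkQ_relations (w : R × (Unknown R →₀ R)) :
    (relations R).mkQ w = w.2.sum (fun p c => c • solution p) - w.1 • omega R := by
  have hw : w = w.2.sum (fun p c => c • ((0, Finsupp.single p 1) : R × (Unknown R →₀ R))) -
      w.1 • ((-1, 0) : R × (Unknown R →₀ R)) := by
    refine Prod.ext ?_ ?_
    · simp [Finsupp.sum, Prod.fst_sum]
    · simpa [Finsupp.sum, Prod.snd_sum] using (Finsupp.sum_single w.2).symm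
  conv_lhs => rw [hw]
  simp only [Finsupp.sum, map_sub, map_sum, map_smul]
  rfl

theorem omega_ne_zero : omega R ≠ 0 := by
  intro h
  obtain ⟨T, hT⟩ := (Submodule.Quotient.mk_eq_zero _).1 h
  exact one_ne_zero (neg_eq_zero.1 hT.fst_eq_zero)

theorem sum_mat_smul_solution (s : FullSystem R) (i : Fin s.size) :
    ∑ j, s.mat i j • solution ⟨s, j⟩ = s.rhs i • omega R := by
  have h := (Submodule.Quotient.mk_eq_zero (relations R)).2 (isRelation_row s i)
  rw [← Submodule.mkQ_apply, mkQ_relations, sub_eq_zero] at h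
  rw [← h, ← Finsupp.sum_finsetSum_index] <;> simp [add_smul]

theorem sum_jointMat_smul_solution (T : Finset (FullSystem R)) (p : UnknownOf T) :
    ∑ q, jointMat T p q • solution q.1 = jointRhs T p • omega R := by
  obtain ⟨⟨s, i⟩, hs⟩ := p
  rw [jointRhs, ← sum_mat_smul_solution s i]
  symm
  refine Fintype.sum_of_injective (fun j => ⟨⟨s, j⟩, hs⟩) (fun i j h => ?_) _ _ ?_ fun j => ?_
  · simpa using h
  · rintro ⟨⟨t, j⟩, ht⟩ hj
    rw [jointMat_apply_of_ne, zero_smul]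
    rintro rfl
    exact hj ⟨j, rfl⟩
  · rw [jointMat_apply_self]

open scoped Matrix.Module

theorem eq_zero_of_smul_eq_zero [Fintype σ] [DecidableEq σ] {C : Matrix σ σ R} (hC : IsFull C)
    {y : σ → SolutionModule R} (h : C • y = 0) : y = 0 := by
  choose w hw using fun s => (relations R).mkQ_surjective (y s)
  funext s
  rw [← hw, Submodule.mkQ_apply]
  refine (Submodule.Quotient.mk_eq_zero _).2 (IsRelation.of_sum_smul hC (fun s => ?_) s)
  refine (Submodule.Quotient.mk_eq_zero (relations R)).1 ?_
  rw [← Submodule.mkQ_apply, map_sum]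
  simpa [hw] using congrFun h s

theorem exists_eq_sum_solution [Finite σ] (r : σ → SolutionModule R) :
    ∃ (T : Finset (FullSystem R)) (F : Matrix σ (UnknownOf T) R) (d : σ → R),
      ∀ s, r s = ∑ p, F s p • solution p.1 + d s • omega R := by
  classical
  cases nonempty_fintype σ
  choose w hw using fun s => (relations R).mkQ_surjective (r s)
  let T := Finset.univ.biUnion fun t => (w t).2.support.image Sigma.fst
  have hT {t p} (hp : p ∈ (w t).2.support) : p.1 ∈ T :=
    Finset.mem_biUnion.2 ⟨t, Finset.mem_univ t, Finset.mem_image_of_mem _ hp⟩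
  refine ⟨T, of fun s p => (w s).2 p, fun s => -(w s).1, fun s => ?_⟩
  rw [← hw, mkQ_relations, neg_smul, ← sub_eq_add_neg]
  congr 1
  rw [Finsupp.sum, ← Finset.sum_coe_sort]
  refine Fintype.sum_of_injective (fun p => ⟨p.1, hT p.2⟩) (fun p q h => ?_) _ _ (fun p hp => ?_)
    fun p => rfl
  · exact Subtype.ext (congrArg (fun p : UnknownOf T => p.1) h)
  · suffices (w s).2 p = 0 by simp [this]
    by_contra hp'
    exact hp ⟨⟨p, Finsupp.mem_support_iff.2 hp'⟩, rfl⟩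

theorem exists_smul_eq [Fintype σ] [DecidableEq σ] {C : Matrix σ σ R} (hC : IsFull C)
    (r : σ → SolutionModule R) : ∃ y : σ → SolutionModule R, C • y = r := by
  classical
  obtain ⟨T, F, d, hr⟩ := exists_eq_sum_solution r
  let A := fromBlocks C (-F) 0 (jointMat T)
  have hA : IsFull A := hC.fromBlocks_zero (isFull_jointMat T) _
  let e := Fintype.equivFin (σ ⊕ UnknownOf T)
  let s : FullSystem R :=
    ⟨_, A.submatrix e.symm e.symm, Sum.elim d (jointRhs T) ∘ e.symm, hA.reindex _ _⟩
  let z : σ ⊕ UnknownOf T → SolutionModule R := fun q => solution ⟨s, e q⟩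
  have hz (q) : ∑ q', A q q' • z q' = Sum.elim d (jointRhs T) q • omega R := by
    simpa [s, z, ← e.sum_comp] using sum_mat_smul_solution s (e q)
  have hlow (p : UnknownOf T) : z (.inr p) = solution p.1 := by
    have : (fun p => z (.inr p) - solution p.1) = 0 := by
      refine eq_zero_of_smul_eq_zero (isFull_jointMat T) (funext fun p => ?_)
      simpa [A, Matrix.Module.smul_apply, smul_sub, sum_jointMat_smul_solution, sub_eq_zero]
        using hz (.inr p)
    exact sub_eq_zero.1 (congrFun this p)
  refine ⟨z ∘ .inl, funext fun i => ?_⟩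
  have h := hz (.inl i)
  simp only [A, Fintype.sum_sum_type, fromBlocks_apply₁₁, fromBlocks_apply₁₂, hlow,
    Matrix.neg_apply, neg_smul, Finset.sum_neg_distrib, Sum.elim_inl, ← sub_eq_add_neg] at h
  rw [hr, add_comm, ← h, sub_add_cancel]
  rfl

end FullSystem

end UniversalModule

section InvertsFull

variable {R B : Type*} [Ring R] [Ring B]

/-- A ring homomorphism inverts full matrices if it maps every full matrix to an invertible one. -/
def InvertsFull (θ : R →+* B) : Prop :=
  ∀ {k : ℕ} (A : Matrix (Fin k) (Fin k) R), IsFull A → IsUnit (A.map θ)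

theorem InvertsFull.isUnit_map {θ : R →+* B} (hθ : InvertsFull θ) {κ : Type*} [Fintype κ]
    [DecidableEq κ] {A : Matrix κ κ R} (hA : IsFull A) : IsUnit (A.map θ) := by
  let e := Fintype.equivFin κ
  simpa [← submatrix_map] using
    (hθ _ (hA.reindex e.symm e.symm)).map (reindexRingEquiv B e.symm)

theorem InvertsFull.mul_right_injective {θ : R →+* B} (hθ : InvertsFull θ) {κ p : Type*}
    [Fintype κ] {A : Matrix κ κ R} (hA : IsFull A) {u v : Matrix κ p B}
    (h : A.map θ * u = A.map θ * v) : u = v := by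
  classical
  obtain ⟨D, hD⟩ := (hθ.isUnit_map hA).exists_left_inv
  rw [← Matrix.one_mul u, ← Matrix.one_mul v, ← hD, Matrix.mul_assoc, h, Matrix.mul_assoc]

end InvertsFull

section TwistedAction

variable (R M : Type*) [Ring R] [AddCommGroup M] [Module R M]

/-- The direct product of the twists of `M` by all automorphisms of `R`. Its point is that each
automorphism of `R` is implemented by a permutation of the factors. -/
def twistedAction : R →+* Module.End ℤ ((R ≃+* R) → M) where
  toFun r :=
    { toFun m s := s r • m s
      map_add' m m' := funext fun s => smul_add (s r) (m s) (m' s)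
      map_smul' c m := funext fun s => smul_comm (s r) c (m s) }
  map_one' := LinearMap.ext fun m => funext fun s => by simp
  map_mul' a b := LinearMap.ext fun m => funext fun s => by simp [mul_smul]
  map_zero' := LinearMap.ext fun m => funext fun s => by simp
  map_add' a b := LinearMap.ext fun m => funext fun s => by simp [add_smul]

variable {R M}

theorem exists_twistedAction_comm (τ : R ≃+* R) : ∃ S : (Module.End ℤ ((R ≃+* R) → M))ˣ,
    ∀ r, S * twistedAction R M r = twistedAction R M (τ r) * S := by
  let e : (R ≃+* R) ≃ (R ≃+* R) :=
    { toFun s := τ.trans s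
      invFun s := τ.symm.trans s
      left_inv s := RingEquiv.ext fun r => by simp
      right_inv s := RingEquiv.ext fun r => by simp }
  let S := LinearEquiv.funCongrLeft ℤ M e
  exact ⟨(LinearMap.GeneralLinearGroup.generalLinearEquiv _ _).symm S, fun r => rfl⟩

open scoped Matrix.Module in
theorem invertsFull_twistedAction
    (h : ∀ {k : ℕ} {A : Matrix (Fin k) (Fin k) R}, IsFull A →
      Function.Bijective fun m : Fin k → M => A • m) :
    InvertsFull (twistedAction R M) := by
  intro k A hA
  let L := (endVecRingEquivMatrixEnd (Fin k) ℤ ((R ≃+* R) → M)).symm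
    (A.map (twistedAction R M))
  have hL (m s) : (fun i => L m i s) = A.map s • fun i => m i s := by
    funext i
    exact Fintype.sum_apply s fun j => twistedAction R M (A i j) (m j)
  have hs (s : R ≃+* R) := h (hA.map_equiv s)
  rw [← isUnit_map_iff (endVecRingEquivMatrixEnd (Fin k) ℤ ((R ≃+* R) → M)).symm,
    Module.End.isUnit_iff]
  refine ⟨fun m m' hm => ?_, fun r => ?_⟩
  · funext i s
    have hLs : (fun i => L m i s) = fun i => L m' i s := congrArg (fun r i => r i s) hm
    rw [hL, hL] at hLs
    exact congrFun ((hs s).injective hLs) i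
  · choose m hm using fun s => (hs s).surjective fun i => r i s
    refine ⟨fun i s => m s i, funext fun i => funext fun s => ?_⟩
    exact congrFun ((hL (fun i s => m s i) s).trans (hm s)) i

end TwistedAction

section RationalClosure

variable {R B : Type*} [Ring R] [Ring B] {m n p κ : Type*} {θ : R →+* B}

theorem HasFormalValue.map_mul_eq [Fintype κ] {A : Matrix κ κ R} {x : Matrix κ p R}
    {f : Matrix m κ R} {d : Matrix m p R} (h : HasFormalValue A x f d) (hθ : InvertsFull θ)
    (hA : IsFull A) {u : Matrix κ p B} (hu : A.map θ * u = x.map θ) :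
    f.map θ * u = d.map θ := by
  obtain ⟨P, H, U, β, rfl, rfl, rfl, rfl⟩ := innerRankLE_fromBlocks_iff.1 h
  let e := Fintype.equivFin κ
  have hP : IsFull (P.submatrix id e) := by
    refine IsFull.of_mul_right (U := U.submatrix e id) ?_
    rwa [submatrix_mul_equiv]
  have hUu : U.map θ * u = β.map θ := by
    have := hθ.mul_right_injective hP (u := (U.map θ * u).submatrix e id)
      (v := (β.map θ).submatrix e id) ?_
    · simpa using congrArg (Matrix.submatrix · e.symm id) this
    · simp only [← submatrix_map]
      rw [submatrix_mul_equiv, submatrix_mul_equiv, ← Matrix.mul_assoc,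
        ← Matrix.map_mul, hu, Matrix.map_mul]
  rw [Matrix.map_mul, Matrix.mul_assoc, hUu, Matrix.map_mul]

/-- Matrices over `B` of the form `f A⁻¹ x`, where `f`, `A`, `x` come from `R` and `A` is full.
The matrix `u` is `A⁻¹ x`. -/
def IsRational (θ : R →+* B) (P : Matrix m n B) : Prop :=
  ∃ (k : ℕ) (A : Matrix (Fin k) (Fin k) R) (f : Matrix m (Fin k) R) (x : Matrix (Fin k) n R)
    (u : Matrix (Fin k) n B), IsFull A ∧ A.map θ * u = x.map θ ∧ P = f.map θ * u

namespace IsRational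

variable {P : Matrix m n B}

theorem of_isFull [Fintype κ] {A : Matrix κ κ R} {f : Matrix m κ R} {x : Matrix κ n R}
    {u : Matrix κ n B} (hA : IsFull A) (hu : A.map θ * u = x.map θ) :
    IsRational θ (f.map θ * u) := by
  let e := (Fintype.equivFin κ).symm
  refine ⟨_, A.submatrix e e, f.submatrix id e, x.submatrix e id, u.submatrix e id,
    hA.reindex e e, ?_, ?_⟩
  · rw [← submatrix_map, submatrix_mul_equiv, hu, submatrix_map]
  · rw [← submatrix_map, submatrix_mul_equiv, submatrix_id_id]

theorem submatrix {σ τ : Type*} (h : IsRational θ P) (s : σ → m) (t : τ → n) :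
    IsRational θ (P.submatrix s t) := by
  obtain ⟨k, A, f, x, u, hA, hu, rfl⟩ := h
  refine ⟨k, A, f.submatrix s id, x.submatrix id t, u.submatrix id t, hA, ?_, rfl⟩
  exact congrArg (Matrix.submatrix · id t) hu

theorem map_mul_map_conj [Fintype κ] {S : Bˣ} {τ : R ≃+* R} (hS : ∀ r, S * θ r = θ (τ r) * S)
    (Z : Matrix m κ R) (u : Matrix κ n B) :
    (Z.map τ).map θ * u.map (fun b => S * b * S⁻¹) =
      (Z.map θ * u).map fun b => S * b * S⁻¹ := by
  have hθ (r : R) : θ (τ r) = S * θ r * S⁻¹ := by rw [hS, Units.mul_inv_cancel_right]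
  ext
  simp [Matrix.mul_apply, hθ, mul_assoc, Finset.mul_sum, Finset.sum_mul]

theorem conj {S : Bˣ} {τ : R ≃+* R} (hS : ∀ r, S * θ r = θ (τ r) * S)
    (h : IsRational θ P) : IsRational θ (P.map fun b => S * b * S⁻¹) := by
  obtain ⟨k, A, f, x, u, hA, hu, rfl⟩ := h
  refine ⟨k, A.map τ, f.map τ, x.map τ, _, hA.map_equiv τ, ?_, (map_mul_map_conj hS f u).symm⟩
  rw [map_mul_map_conj hS, hu]
  ext
  simp [hS]

theorem of_map [Nontrivial R] [Unique n] (P : Matrix m n R) : IsRational θ (P.map θ) := by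
  classical
  simpa using of_isFull (θ := θ) (f := P) (x := 1) (u := (1 : Matrix n n R).map θ)
    (isFull_one R n) (by simp)

theorem exists_mul_eq_one [Fintype m] [DecidableEq m] [Fintype κ] {A : Matrix κ κ R}
    {f : Matrix m κ R} {x : Matrix κ m R} (hθ : InvertsFull θ) (hA : IsFull A)
    (hM : IsFull (fromBlocks A x f 0)) {u : Matrix κ m B} (hu : A.map θ * u = x.map θ) :
    ∃ Q : Matrix m m B, IsRational θ Q ∧ f.map θ * u * Q = 1 := by
  classical
  obtain ⟨D, hD⟩ := (hθ.isUnit_map hM).exists_right_inv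
  have hw : (fromBlocks A x f 0).map θ * D.toCols₂ = fromRows 0 1 := by
    change ((fromBlocks A x f 0).map θ * D).toCols₂ = _
    rw [hD, ← fromBlocks_one]
    ext (i | i) j <;> rfl
  have hQ := of_isFull (f := fromCols (0 : Matrix m κ R) (-1 : Matrix m m R))
    (x := fromRows 0 1) hM (by rw [hw, fromRows_map]; simp)
  rw [← fromRows_toRows D.toCols₂] at hw hQ
  generalize D.toCols₂.toRows₁ = y at hw hQ
  generalize D.toCols₂.toRows₂ = q at hw hQ
  rw [fromBlocks_map, fromBlocks_mul_fromRows, fromRows_ext_iff] at hw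
  have hy : y = -(u * q) := by
    refine hθ.mul_right_injective hA ?_
    rw [Matrix.mul_neg, ← Matrix.mul_assoc, hu]
    exact eq_neg_of_add_eq_zero_left hw.1
  refine ⟨-q, ?_, ?_⟩
  · simpa [fromCols_map, fromCols_mul_fromRows, Matrix.map_neg] using hQ
  · simpa [hy, Matrix.mul_assoc] using hw.2

theorem eq_zero_or_exists_mul_eq_one [Unique m] [Fintype m] [DecidableEq m] {P : Matrix m m B}
    (hθ : InvertsFull θ) (h : IsRational θ P) :
    P = 0 ∨ ∃ Q : Matrix m m B, IsRational θ Q ∧ P * Q = 1 := by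
  obtain ⟨k, A, f, x, u, hA, hu, rfl⟩ := h
  by_cases hM : IsFull (fromBlocks A x f 0)
  · exact .inr (exists_mul_eq_one hθ hA hM hu)
  · obtain ⟨r, hr, hrk⟩ : ∃ r, InnerRankLE (fromBlocks A x f 0) r ∧ r ≤ Fintype.card (Fin k) := by
      simpa [IsFull, Nat.lt_succ_iff] using hM
    obtain ⟨X, Y, hXY⟩ := hr
    have h : HasFormalValue A x f 0 := by
      rw [HasFormalValue, hXY]
      exact .mul X Y (by simpa using hrk)
    left
    rw [h.map_mul_eq hθ hA hu]
    simp

section Sylvester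

variable [IsSylvesterDomain R]

theorem add (h : IsRational θ P) {P' : Matrix m n B} (h' : IsRational θ P') :
    IsRational θ (P + P') := by
  obtain ⟨k, A, f, x, u, hA, hu, rfl⟩ := h
  obtain ⟨k', A', f', x', u', hA', hu', rfl⟩ := h'
  convert of_isFull (θ := θ) (f := fromCols f f') (x := fromRows x x') (u := fromRows u u')
    (hA.fromBlocks_zero hA' 0) ?_ using 1
  · rw [fromCols_map, fromCols_mul_fromRows]
  · rw [fromBlocks_map, fromBlocks_mul_fromRows, hu, hu', fromRows_map]
    simp

theorem mul [Fintype n] (h : IsRational θ P) {P' : Matrix n p B} (h' : IsRational θ P') :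
    IsRational θ (P * P') := by
  obtain ⟨k, A, f, x, u, hA, hu, rfl⟩ := h
  obtain ⟨k', A', f', x', u', hA', hu', rfl⟩ := h'
  convert of_isFull (θ := θ) (f := fromCols f 0) (x := fromRows 0 x')
    (u := fromRows (u * (f'.map θ * u')) u') (hA.fromBlocks_zero hA' (-(x * f'))) ?_ using 1
  · simp [fromCols_map, fromCols_mul_fromRows, Matrix.mul_assoc]
  · rw [fromBlocks_map, fromBlocks_mul_fromRows, ← Matrix.mul_assoc, hu, hu', fromRows_map]
    simp [Matrix.mul_assoc, Matrix.map_mul, Matrix.map_neg]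

end Sylvester

end IsRational

variable [IsSylvesterDomain R]

variable (θ) in
/-- The subring of `B` formed by the elements `f A⁻¹ x`, where `f`, `A`, `x` are matrices over `R`
with `A` full. -/
def rationalClosure : Subring B where
  carrier := {p | IsRational θ (Matrix.scalar Unit p)}
  one_mem' := by simpa using IsRational.of_map (θ := θ) (1 : Matrix Unit Unit R)
  zero_mem' := by simpa using IsRational.of_map (θ := θ) (0 : Matrix Unit Unit R)
  mul_mem' ha hb := by simpa using IsRational.mul ha hb
  add_mem' ha hb := by simpa using IsRational.add ha hb
  neg_mem' ha := by
    simpa using IsRational.mul (.of_map (θ := θ) (Matrix.scalar Unit (-1 : R))) ha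

namespace rationalClosure

theorem mem_iff {p : B} : p ∈ rationalClosure θ ↔ IsRational θ (Matrix.scalar Unit p) := Iff.rfl

theorem apply_mem (r : R) : θ r ∈ rationalClosure θ := by
  simpa [mem_iff] using IsRational.of_map (θ := θ) (Matrix.scalar Unit r)

theorem conj_mem {S : Bˣ} {τ : R ≃+* R} (hS : ∀ r, S * θ r = θ (τ r) * S) {p : B}
    (hp : p ∈ rationalClosure θ) : S * p * S⁻¹ ∈ rationalClosure θ := by
  simpa [mem_iff] using IsRational.conj hS hp

theorem exists_mul_eq_one (hθ : InvertsFull θ) {p : rationalClosure θ} (hp : p ≠ 0) :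
    ∃ q : rationalClosure θ, p * q = 1 := by
  obtain h | ⟨Q, hQ, hpQ⟩ := IsRational.eq_zero_or_exists_mul_eq_one hθ p.2
  · exact absurd (Subtype.ext (by simpa using congrFun (congrFun h ()) ())) hp
  · obtain ⟨q, rfl⟩ : ∃ q, Q = Matrix.scalar Unit q :=
      ⟨Q () (), Matrix.ext fun _ _ => by simp⟩
    exact ⟨⟨q, hQ⟩, Subtype.ext (by simpa [← Matrix.ext_iff] using hpQ)⟩

theorem isUnit_or_eq_zero [Nontrivial B] (hθ : InvertsFull θ) (p : rationalClosure θ) :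
    IsUnit p ∨ p = 0 := by
  refine or_iff_not_imp_right.2 fun hp => ?_
  obtain ⟨q, hpq⟩ := exists_mul_eq_one hθ hp
  obtain ⟨r, hqr⟩ := exists_mul_eq_one hθ (right_ne_zero_of_mul (hpq.trans_ne one_ne_zero))
  obtain rfl : p = r := left_inv_eq_right_inv hpq hqr
  exact ⟨⟨p, q, hpq, hqr⟩, rfl⟩

theorem invertsFull_codRestrict (hθ : InvertsFull θ) :
    InvertsFull (θ.codRestrict (rationalClosure θ) apply_mem) := by
  intro k A hA
  obtain ⟨D, hD⟩ := hθ A hA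
  have hmem (i j) : (↑D⁻¹ : Matrix (Fin k) (Fin k) B) i j ∈ rationalClosure θ := by
    have hrat := IsRational.of_isFull (θ := θ) hA
      (f := (1 : Matrix (Fin k) (Fin k) R)) (x := 1)
      (u := (↑D⁻¹ : Matrix (Fin k) (Fin k) B)) (by simp [← hD])
    rw [mem_iff]
    convert hrat.submatrix (fun _ : Unit => i) (fun _ : Unit => j)
    ext
    simp
  refine isUnit_iff_exists.2 ⟨of fun i j => ⟨_, hmem i j⟩, ?_, ?_⟩
  · have h : A.map θ * (↑D⁻¹ : Matrix (Fin k) (Fin k) B) = 1 := by rw [← hD, Units.mul_inv]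
    ext i j
    simpa [Matrix.mul_apply, Matrix.one_apply, apply_ite] using congrFun (congrFun h i) j
  · have h : (↑D⁻¹ : Matrix (Fin k) (Fin k) B) * A.map θ = 1 := by rw [← hD, Units.inv_mul]
    ext i j
    simpa [Matrix.mul_apply, Matrix.one_apply, apply_ite] using congrFun (congrFun h i) j

end rationalClosure

end RationalClosure

open scoped Matrix.Module in
theorem exists_invertsFull (R : Type u) [Ring R] [IsSylvesterDomain R] :
    ∃ (B : Type u) (_ : Ring B) (_ : Nontrivial B) (θ : R →+* B), InvertsFull θ ∧
      ∀ τ : R ≃+* R, ∃ S : Bˣ, ∀ r, S * θ r = θ (τ r) * S := by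
  have : Nontrivial (FullSystem.SolutionModule R) := ⟨_, _, FullSystem.omega_ne_zero⟩
  refine ⟨_, inferInstance, inferInstance, twistedAction R (FullSystem.SolutionModule R),
    invertsFull_twistedAction fun hA => ⟨fun m m' h => ?_, FullSystem.exists_smul_eq hA⟩,
    exists_twistedAction_comm⟩
  rw [← sub_eq_zero]
  apply FullSystem.eq_zero_of_smul_eq_zero hA
  rw [smul_sub, sub_eq_zero]
  exact h

theorem exists_universal_divisionRing (R : Type u) [Ring R] [IsSylvesterDomain R] :
    ∃ (Q : Type u) (_ : DivisionRing Q) (θ : R →+* Q), InvertsFull θ ∧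
      ∀ τ : R ≃+* R, ∃ τ' : Q →+* Q, ∀ r, τ' (θ r) = θ (τ r) := by
  obtain ⟨B, _, _, θ, hθ, hconj⟩ := exists_invertsFull R
  refine ⟨rationalClosure θ, .ofIsUnitOrEqZero (rationalClosure.isUnit_or_eq_zero hθ),
    θ.codRestrict _ rationalClosure.apply_mem, rationalClosure.invertsFull_codRestrict hθ,
    fun τ => ?_⟩
  obtain ⟨S, hS⟩ := hconj τ
  let conj : B →+* B := MulSemiringAction.toRingEquiv (ConjAct Bˣ) B (ConjAct.toConjAct S)
  refine ⟨(conj.comp (rationalClosure θ).subtype).codRestrict _ fun p =>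
    rationalClosure.conj_mem hS p.2, fun r => Subtype.ext ?_⟩
  change S * θ r * S⁻¹ = θ (τ r)
  rw [hS, Units.mul_inv_cancel_right]

section Transduction

open Polynomial

variable {R : Type*} [Ring R] {gr : R →+* R[X]} {m n : Type*}

/-- Homogeneity of degree `d` for the `ℕ`-grading of `R` encoded by `gr`: the coefficient of `X ^ d`
in `gr r` is the component of degree `d` of `r`. -/
def IsHomogeneousFor (gr : R →+* R[X]) (d : ℕ) (r : R) : Prop := gr r = monomial d r

namespace IsHomogeneousFor

variable {d e : ℕ} {r s : R}

theorem zero (gr : R →+* R[X]) (d : ℕ) : IsHomogeneousFor gr d 0 := by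
  rw [IsHomogeneousFor, map_zero, map_zero]

theorem add (hr : IsHomogeneousFor gr d r) (hs : IsHomogeneousFor gr d s) :
    IsHomogeneousFor gr d (r + s) := by
  rw [IsHomogeneousFor, map_add, map_add, hr, hs]

theorem neg (h : IsHomogeneousFor gr d r) : IsHomogeneousFor gr d (-r) := by
  rw [IsHomogeneousFor, map_neg, map_neg, h]

theorem mul (hr : IsHomogeneousFor gr d r) (hs : IsHomogeneousFor gr e s) :
    IsHomogeneousFor gr (d + e) (r * s) := by
  rw [IsHomogeneousFor, map_mul, hr, hs, monomial_mul_monomial]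

theorem units_inv {u : Rˣ} (h : IsHomogeneousFor gr 0 (u : R)) :
    IsHomogeneousFor gr 0 (↑u⁻¹ : R) := by
  refine left_inv_eq_right_inv (a := gr u) ?_ ?_
  · rw [← map_mul, Units.inv_mul, map_one]
  · rw [h, monomial_mul_monomial, Units.mul_inv, add_zero, monomial_zero_one]

theorem natDegree_le (h : IsHomogeneousFor gr d r) : (gr r).natDegree ≤ d := by
  rw [h]
  exact natDegree_monomial_le r

theorem coeff (h : IsHomogeneousFor gr d r) : (gr r).coeff d = r := by
  rw [h, coeff_monomial_same]

end IsHomogeneousFor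

/-- A form of Cohn's inverse weak algorithm: homogeneous elements of degree `0` are invertible or
zero, and those of positive degree are separated by additive maps of degree `-1` that are left
`R`-linear in positive degrees. -/
structure HasTransductions (gr : R →+* R[X]) : Prop where
  injective : Function.Injective gr
  homogeneous_coeff (r : R) (d : ℕ) : IsHomogeneousFor gr d ((gr r).coeff d)
  isUnit {r : R} : r ≠ 0 → IsHomogeneousFor gr 0 r → IsUnit r
  exists_transduction {d : ℕ} {z : R} : z ≠ 0 → IsHomogeneousFor gr (d + 1) z →
    ∃ δ : R →+ R, δ z ≠ 0 ∧
      (∀ {e : ℕ} {y : R}, IsHomogeneousFor gr (e + 1) y → IsHomogeneousFor gr e (δ y)) ∧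
      ∀ {e : ℕ} {y : R}, IsHomogeneousFor gr (e + 1) y → ∀ r, δ (r * y) = r * δ y

section Relation

variable [Fintype n] {X : Matrix m n R} {d : n → ℕ} {N : ℕ}

/-- `z` is a column of homogeneous entries with `d i + deg (z i) = N` whenever `z i ≠ 0`. -/
def IsHomogeneousColumn (gr : R →+* R[X]) (d : n → ℕ) (N : ℕ) (z : n → R) : Prop :=
  ∀ i, z i ≠ 0 → ∃ e, d i + e = N ∧ IsHomogeneousFor gr e (z i)

theorem exists_col_eq_mulVec_of_isUnit {z : n → R} (hz : IsHomogeneousColumn gr d N z)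
    (hXz : X *ᵥ z = 0) {k : n} (hk : IsUnit (z k)) (hk0 : IsHomogeneousFor gr 0 (z k))
    (hdk : d k = N) :
    ∃ r, r k = 0 ∧ IsHomogeneousColumn gr d (d k) r ∧ X.col k = X *ᵥ r := by
  classical
  obtain ⟨u, hu⟩ := hk
  rw [← hu] at hk0
  refine ⟨Pi.single k 1 - MulOpposite.op (↑u⁻¹ : R) • z, by simp [← hu], fun j hj => ?_, ?_⟩
  · obtain rfl | hjk := eq_or_ne j k
    · simp [← hu] at hj
    · simp only [Pi.sub_apply, Pi.single_eq_of_ne hjk, zero_sub, Pi.smul_apply,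
        MulOpposite.smul_eq_mul_unop, MulOpposite.unop_op] at hj ⊢
      obtain ⟨e, he, hze⟩ := hz j fun h => hj (by rw [h, zero_mul, neg_zero])
      exact ⟨e, he.trans hdk.symm, (hze.mul hk0.units_inv).neg⟩
  · rw [Matrix.mulVec_sub, Matrix.mulVec_smul, hXz, smul_zero, sub_zero, mulVec_single_one]

theorem HasTransductions.exists_col_eq_mulVec (h : HasTransductions gr) {z : n → R}
    (hz : IsHomogeneousColumn gr d N z) (hXz : X *ᵥ z = 0) (hne : z ≠ 0) :
    ∃ k r, z k ≠ 0 ∧ r k = 0 ∧ IsHomogeneousColumn gr d (d k) r ∧ X.col k = X *ᵥ r := by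
  induction N generalizing z with
  | zero =>
    obtain ⟨k, hk⟩ := Function.ne_iff.1 hne
    obtain ⟨e, he, hke⟩ := hz k hk
    obtain ⟨hdk, rfl⟩ := Nat.add_eq_zero_iff.1 he
    obtain ⟨r, hr⟩ := exists_col_eq_mulVec_of_isUnit hz hXz (h.isUnit hk hke) hke hdk
    exact ⟨k, r, hk, hr⟩
  | succ N ih =>
    by_cases h0 : ∃ k, z k ≠ 0 ∧ IsHomogeneousFor gr 0 (z k) ∧ d k = N + 1
    · obtain ⟨k, hk, hk0, hdk⟩ := h0
      obtain ⟨r, hr⟩ := exists_col_eq_mulVec_of_isUnit hz hXz (h.isUnit hk hk0) hk0 hdk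
      exact ⟨k, r, hk, hr⟩
    have hpos (i) (hi : z i ≠ 0) : ∃ e, d i + e = N ∧ IsHomogeneousFor gr (e + 1) (z i) := by
      obtain ⟨_ | e, he, hie⟩ := hz i hi
      · exact absurd ⟨i, hi, hie, he⟩ h0
      · exact ⟨e, by omega, hie⟩
    obtain ⟨k, hk⟩ := Function.ne_iff.1 hne
    obtain ⟨e, -, hke⟩ := hpos k hk
    obtain ⟨δ, hδk, hδ, hδmul⟩ := h.exists_transduction hk hke
    have hXδ : X *ᵥ (δ ∘ z) = 0 := by
      funext a
      have hmul (i) : X a i * δ (z i) = δ (X a i * z i) := by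
        obtain hi | hi := eq_or_ne (z i) 0
        · simp [hi]
        · obtain ⟨e, -, hie⟩ := hpos i hi
          exact (hδmul hie _).symm
      calc (X *ᵥ (δ ∘ z)) a = δ ((X *ᵥ z) a) := by simp [mulVec, dotProduct, hmul, map_sum]
        _ = 0 := by rw [hXz, Pi.zero_apply, map_zero]
    have hδz : IsHomogeneousColumn gr d N (δ ∘ z) := fun i hi => by
      obtain ⟨e, he, hie⟩ := hpos i fun h' => hi (by simp [h'])
      exact ⟨e, he, hδ hie⟩
    obtain ⟨k', r, hk', hr⟩ := ih hδz hXδ fun h' => hδk (congrFun h' k)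
    exact ⟨k', r, fun h' => hk' (by simp [h']), hr⟩

end Relation

section Degree

variable [Fintype n] {X : Matrix m n R} {d : n → ℕ} {N : ℕ} {y : n → R}

theorem natDegree_map_mul_le {r s : R} {e N : ℕ} (hr : (gr r).natDegree ≤ e)
    (hs : s ≠ 0 → e + (gr s).natDegree ≤ N) : (gr (r * s)).natDegree ≤ N := by
  obtain rfl | hs0 := eq_or_ne s 0
  · simp
  · rw [map_mul]
    exact natDegree_mul_le.trans ((Nat.add_le_add_right hr _).trans (hs hs0))

theorem coeff_map_mul {r s : R} {e N : ℕ} (hr : (gr r).natDegree ≤ e)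
    (hs : s ≠ 0 → e + (gr s).natDegree ≤ N) :
    (gr (r * s)).coeff N = (gr r).coeff e * (gr s).coeff (N - e) := by
  obtain rfl | hs0 := eq_or_ne s 0
  · simp
  · have := hs hs0
    obtain ⟨f, rfl⟩ := Nat.exists_eq_add_of_le ((Nat.le_add_right _ _).trans this)
    rw [map_mul, Nat.add_sub_cancel_left]
    exact coeff_mul_add_eq_of_natDegree_le hr (by omega)

theorem natDegree_map_mulVec_le (hX : ∀ a i, (gr (X a i)).natDegree ≤ d i)
    (hy : ∀ i, y i ≠ 0 → d i + (gr (y i)).natDegree ≤ N) (a : m) :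
    (gr ((X *ᵥ y) a)).natDegree ≤ N := by
  rw [mulVec, dotProduct, map_sum]
  exact natDegree_sum_le_of_forall_le _ _ fun i _ => natDegree_map_mul_le (hX a i) (hy i)

theorem coeff_map_mulVec (hX : ∀ a i, (gr (X a i)).natDegree ≤ d i)
    (hy : ∀ i, y i ≠ 0 → d i + (gr (y i)).natDegree ≤ N) (a : m) :
    (gr ((X *ᵥ y) a)).coeff N =
      (of (fun a i => (gr (X a i)).coeff (d i)) *ᵥ fun i => (gr (y i)).coeff (N - d i)) a := by
  rw [mulVec, dotProduct, map_sum, finsetSum_coeff]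
  exact Finset.sum_congr rfl fun i _ => coeff_map_mul (hX a i) (hy i)

theorem IsHomogeneousColumn.degree_sub_mulVec_lt {r : n → R} {k : n}
    (hX : ∀ a i, (gr (X a i)).natDegree ≤ d i) (hr : IsHomogeneousColumn gr d (d k) r)
    (hcol : (of fun a i => (gr (X a i)).coeff (d i)).col k =
      (of fun a i => (gr (X a i)).coeff (d i)) *ᵥ r) (a : m) :
    (gr (X a k - (X *ᵥ r) a)).degree < d k := by
  have hr_le (j) (hj : r j ≠ 0) : d j + (gr (r j)).natDegree ≤ d k := by
    obtain ⟨e, he, hje⟩ := hr j hj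
    exact he ▸ Nat.add_le_add_left hje.natDegree_le _
  have hr_coeff : (fun j => (gr (r j)).coeff (d k - d j)) = r := by
    funext j
    obtain hj | hj := eq_or_ne (r j) 0
    · simp [hj]
    · obtain ⟨e, he, hje⟩ := hr j hj
      rw [← he, Nat.add_sub_cancel_left, hje.coeff]
  rw [degree_lt_iff_coeff_zero]
  intro e he
  rw [map_sub, coeff_sub]
  obtain rfl | he := he.eq_or_lt
  · rw [coeff_map_mulVec hX hr_le, hr_coeff, ← hcol]
    exact sub_self _
  · rw [coeff_eq_zero_of_natDegree_lt ((hX a k).trans_lt he),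
      coeff_eq_zero_of_natDegree_lt ((natDegree_map_mulVec_le hX hr_le a).trans_lt he), sub_zero]

end Degree

section ColDegree

variable [Fintype m]

/-- The largest degree of an entry of the `i`-th column of `X`, which is `⊥` if that column is
zero. -/
noncomputable def colDegree (gr : R →+* R[X]) (X : Matrix m n R) (i : n) : WithBot ℕ :=
  Finset.univ.sup fun a => (gr (X a i)).degree

theorem degree_le_colDegree (X : Matrix m n R) (a : m) (i : n) :
    (gr (X a i)).degree ≤ colDegree gr X i :=
  Finset.le_sup (f := fun a => (gr (X a i)).degree) (Finset.mem_univ a)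

theorem natDegree_le_unbotD_colDegree (X : Matrix m n R) (a : m) (i : n) :
    (gr (X a i)).natDegree ≤ (colDegree gr X i).unbotD 0 :=
  natDegree_le_of_degree_le ((degree_le_colDegree X a i).trans (WithBot.le_coe_unbotD _ _))

theorem colDegree_eq_unbotD (h : Function.Injective gr) {X : Matrix m n R} {i : n}
    (hi : ∃ a, X a i ≠ 0) : colDegree gr X i = (colDegree gr X i).unbotD 0 := by
  obtain ⟨a, ha⟩ := hi
  refine (WithBot.unbotD_eq_iff.1 rfl).resolve_right fun hbot => ha (h ?_)
  rw [map_zero, ← degree_eq_bot, ← le_bot_iff, ← hbot.1]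
  exact degree_le_colDegree X a i

variable [Fintype n]

namespace HasTransductions

theorem exists_degree_sub_lt_colDegree (h : HasTransductions gr) {X : Matrix m n R} {y : n → R}
    (hy : ∀ i, y i ≠ 0 → ∃ a, X a i ≠ 0) (hXy : X *ᵥ y = 0) (hne : y ≠ 0) :
    ∃ k r, r k = 0 ∧ ∀ a, (gr (X a k - (X *ᵥ r) a)).degree < colDegree gr X k := by
  classical
  let d (i : n) : ℕ := (colDegree gr X i).unbotD 0
  have hX : ∀ a i, (gr (X a i)).natDegree ≤ d i := natDegree_le_unbotD_colDegree X
  obtain ⟨l, hl, hmax⟩ : ∃ l, y l ≠ 0 ∧ ∀ i, y i ≠ 0 →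
      d i + (gr (y i)).natDegree ≤ d l + (gr (y l)).natDegree := by
    simpa using (Finset.univ.filter (y · ≠ 0)).exists_max_image
      (fun i => d i + (gr (y i)).natDegree) (by simpa [Finset.Nonempty] using Function.ne_iff.1 hne)
  set N := d l + (gr (y l)).natDegree
  let z (i : n) : R := (gr (y i)).coeff (N - d i)
  have hz_ne (i) (hi : z i ≠ 0) : y i ≠ 0 := fun h0 => hi (by simp [z, h0])
  have hz : IsHomogeneousColumn gr d N z := fun i hi =>
    ⟨N - d i, Nat.add_sub_cancel' ((Nat.le_add_right _ _).trans (hmax i (hz_ne i hi))),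
      h.homogeneous_coeff _ _⟩
  have hzl : z l ≠ 0 := by simpa [z, N] using fun h0 => hl (h.injective (by simpa using h0))
  have htop : of (fun a i => (gr (X a i)).coeff (d i)) *ᵥ z = 0 := by
    funext a
    rw [← coeff_map_mulVec hX hmax, hXy, Pi.zero_apply, map_zero, coeff_zero]
  obtain ⟨k, r, hzk, hrk, hr, hcol⟩ := h.exists_col_eq_mulVec hz htop (Function.ne_iff.2 ⟨l, hzl⟩)
  refine ⟨k, r, hrk, fun a => ?_⟩
  rw [colDegree_eq_unbotD h.injective (hy k (hz_ne k hzk))]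
  exact hr.degree_sub_mulVec_lt hX hcol a

theorem exists_colDegree_mul_lt [DecidableEq n] (h : HasTransductions gr) {p : Type*}
    {X : Matrix m n R} {Y : Matrix n p R} (hXY : X * Y = 0)
    (hne : ∃ i, (∃ a, X a i ≠ 0) ∧ ∃ b, Y i b ≠ 0) :
    ∃ U V : Matrix n n R, U * V = 1 ∧ colDegree gr (X * U) < colDegree gr X := by
  classical
  obtain ⟨i, ⟨a₀, ha₀⟩, b, hib⟩ := hne
  let y (j : n) : R := if ∃ a, X a j ≠ 0 then Y j b else 0
  have hXy : X *ᵥ y = 0 := by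
    funext a
    refine (Finset.sum_congr rfl fun j _ => ?_).trans (congrFun (congrFun hXY a) b)
    by_cases hj : ∃ a, X a j ≠ 0
    · simp only [y, if_pos hj]
    · simp [not_exists_not.1 hj a]
  obtain ⟨k, r, hrk, hlt⟩ := h.exists_degree_sub_lt_colDegree
    (fun j hj => by_contra fun h0 => hj (if_neg h0)) hXy
    (Function.ne_iff.2 ⟨i, by simpa [y, hib] using ⟨a₀, ha₀⟩⟩)
  let M : Matrix n n R := vecMulVec r (Pi.single k 1)
  have hM : M * M = 0 := by simp [M, vecMulVec_mul_vecMulVec, hrk]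
  refine ⟨1 - M, 1 + M, by rw [sub_mul, mul_add, mul_add, hM]; simp, ?_⟩
  have hXM (a j) : (X * (1 - M) : Matrix m n R) a j =
      if j = k then X a k - (X *ᵥ r) a else X a j := by
    rw [Matrix.mul_sub, Matrix.mul_one, mul_vecMulVec]
    obtain rfl | hjk := eq_or_ne j k <;> simp [vecMulVec_apply, *]
  have hk : colDegree gr (X * (1 - M)) k < colDegree gr X k := by
    rw [colDegree, Finset.sup_lt_iff (bot_le.trans_lt (hlt a₀))]
    simpa only [hXM, if_true] using fun a _ => hlt a
  refine Pi.lt_def.2 ⟨fun j => ?_, k, hk⟩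
  obtain rfl | hjk := eq_or_ne j k
  · exact hk.le
  · simp [colDegree, hXM, hjk]

theorem isSylvesterDomain [Nontrivial R] (h : HasTransductions gr) : IsSylvesterDomain R where
  law_of_nullity {m n p} X Y hXY := by
    classical
    induction hD : colDegree gr X using WellFoundedLT.induction generalizing X Y with
    | ind D ih =>
    by_cases hne : ∃ i, (∃ a, X a i ≠ 0) ∧ ∃ b, Y i b ≠ 0
    · obtain ⟨U, V, hUV, hlt⟩ := h.exists_colDegree_mul_lt hXY hne
      obtain ⟨r, s, hrs, hX, hY⟩ := ih _ (hD ▸ hlt) (X * U) (V * Y) (by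
        rw [Matrix.mul_assoc, ← Matrix.mul_assoc U, hUV, Matrix.one_mul, hXY]) rfl
      refine ⟨r, s, hrs, ?_, ?_⟩
      · simpa [Matrix.mul_assoc, hUV] using hX.mul_right V
      · simpa [← Matrix.mul_assoc, hUV] using hY.mul_left U
    · refine ⟨_, _, ?_, InnerRankLE.of_col_eq_zero (q := fun i => ∃ a, X a i ≠ 0) fun a i hi => ?_,
        InnerRankLE.of_row_eq_zero (q := fun i => ¬ ∃ a, X a i ≠ 0) fun i b hi => ?_⟩
      · rw [Fintype.card_subtype_compl, Nat.add_sub_cancel' (Fintype.card_subtype_le _),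
          Fintype.card_fin]
      · simpa using not_exists.1 hi a
      · exact by_contra fun hb => hne ⟨i, not_not.1 hi, b, hb⟩

end HasTransductions

end ColDegree

end Transduction

section FreeRingOver

open Polynomial

variable (G E J : Type*) [DivisionRing G] [DivisionRing E] [Module G E]

/-- The defining relations of the ring `E_G⟨V_j⟩` between the formal symbols `a ∈ E` and `V_j`. -/
inductive FreeRingOver.Rel : FreeAlgebra ℤ (E ⊕ J) → FreeAlgebra ℤ (E ⊕ J) → Prop
  | add (a b : E) : Rel (.ι ℤ (.inl (a + b))) (.ι ℤ (.inl a) + .ι ℤ (.inl b))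
  | mul (a b : E) : Rel (.ι ℤ (.inl (a * b))) (.ι ℤ (.inl a) * .ι ℤ (.inl b))
  | one : Rel (.ι ℤ (.inl 1)) 1
  | comm (j : J) (g : G) : Rel (.ι ℤ (.inr j) * .ι ℤ (.inl (g • 1)))
      (.ι ℤ (.inl (g • 1)) * .ι ℤ (.inr j))

/-- The free `E`-ring `E_G⟨V_j : j ∈ J⟩` on indeterminates `V_j` commuting with `G`, which acts on
`E` through `g ↦ g • 1`. -/
def FreeRingOver : Type _ := RingQuot (FreeRingOver.Rel G E J)

instance : Ring (FreeRingOver G E J) := inferInstanceAs (Ring (RingQuot (FreeRingOver.Rel G E J)))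

namespace FreeRingOver

variable {G E J} {S : Type*} [Ring S]

/-- The inclusion of the coefficients into `FreeRingOver G E J`. -/
def of : E →+* FreeRingOver G E J :=
  RingHom.mk' (α := E) (β := FreeRingOver G E J)
    { toFun a := RingQuot.mkRingHom (Rel G E J) (.ι ℤ (.inl a))
      map_one' := (RingQuot.mkRingHom_rel .one).trans (map_one _)
      map_mul' a b := (RingQuot.mkRingHom_rel (.mul a b)).trans (map_mul _ _ _) }
    fun a b => (RingQuot.mkRingHom_rel (.add a b)).trans (map_add _ _ _)

/-- The indeterminate `V_j` of `FreeRingOver G E J`. -/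
def var (j : J) : FreeRingOver G E J := RingQuot.mkRingHom (Rel G E J) (.ι ℤ (.inr j))

theorem var_mul_of_smul_one (j : J) (g : G) :
    (var j * of (g • 1) : FreeRingOver G E J) = of (g • 1) * var j :=
  ((map_mul _ _ _).symm.trans (RingQuot.mkRingHom_rel (.comm j g))).trans (map_mul _ _ _)

/-- The homomorphism given by the universal property of `FreeRingOver G E J`. -/
def lift (θ : E →+* S) (u : J → S) (h : ∀ j (g : G), u j * θ (g • 1) = θ (g • 1) * u j) :
    FreeRingOver G E J →+* S :=
  RingQuot.lift ⟨(FreeAlgebra.lift ℤ (Sum.elim θ u) : FreeAlgebra ℤ (E ⊕ J) →ₐ[ℤ] S), by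
    rintro _ _ (⟨a, b⟩ | ⟨a, b⟩ | _ | ⟨j, g⟩) <;> simp [h]⟩

section lift

variable {θ : E →+* S} {u : J → S} (h : ∀ j (g : G), u j * θ (g • 1) = θ (g • 1) * u j)

@[simp]
theorem lift_of (a : E) : lift θ u h (of a) = θ a := by
  refine (RingQuot.lift_mkRingHom_apply _ _ _).trans ?_
  simp

@[simp]
theorem lift_var (j : J) : lift θ u h (var j) = u j := by
  refine (RingQuot.lift_mkRingHom_apply _ _ _).trans ?_
  simp

end lift

@[elab_as_elim]
theorem induction_on {P : FreeRingOver G E J → Prop} (r : FreeRingOver G E J) (of : ∀ a, P (of a))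
    (var : ∀ j, P (var j)) (add : ∀ r s, P r → P s → P (r + s))
    (mul : ∀ r s, P r → P s → P (r * s)) : P r := by
  obtain ⟨x, rfl⟩ := RingQuot.mkRingHom_surjective (Rel G E J) r
  induction x with
  | grade0 n =>
    have h : RingQuot.mkRingHom (Rel G E J) (algebraMap ℤ _ n) = FreeRingOver.of (n : E) :=
      (eq_intCast ((RingQuot.mkRingHom (Rel G E J)).comp (algebraMap ℤ _)) n).trans
        (map_intCast (FreeRingOver.of : E →+* FreeRingOver G E J) n).symm
    exact h ▸ of n
  | grade1 x => exact x.rec of var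
  | mul x y hx hy => rw [map_mul]; exact mul _ _ hx hy
  | add x y hx hy => rw [map_add]; exact add _ _ hx hy

@[ext high]
theorem hom_ext {f g : FreeRingOver G E J →+* S} (hof : ∀ a, f (of a) = g (of a))
    (hvar : ∀ j, f (var j) = g (var j)) : f = g := by
  ext r
  induction r using induction_on with
  | of a => exact hof a
  | var j => exact hvar j
  | add r s hr hs => rw [map_add, map_add, hr, hs]
  | mul r s hr hs => rw [map_mul, map_mul, hr, hs]

/-- The augmentation of `FreeRingOver G E J`, which sends every indeterminate to `0`. -/
def augmentation : FreeRingOver G E J →+* E :=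
  lift (RingHom.id E) 0 fun _ _ => by rw [Pi.zero_apply, zero_mul, mul_zero]

@[simp]
theorem augmentation_of (a : E) : augmentation (of a : FreeRingOver G E J) = a := lift_of _ a

@[simp]
theorem augmentation_var (j : J) : augmentation (var j : FreeRingOver G E J) = 0 := lift_var _ j

instance : Nontrivial (FreeRingOver G E J) := augmentation.domain_nontrivial

instance : Module E (FreeRingOver G E J) :=
  Module.compHom _ (of : E →+* FreeRingOver G E J)

section Transduction

variable [IsScalarTower G E E] [DecidableEq J] (j : J) (χ : E →ₗ[G] G)

/-- The action of `FreeRingOver G E J` on `FreeRingOver G E J × E` that extends the left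
multiplication on the first factor: `E` acts by left multiplication, and `V_j` sends `(0, c)` to
`(χ c • 1, 0)`, while the other indeterminates kill the second factor. -/
def transductionAction : FreeRingOver G E J →+* AddMonoid.End (FreeRingOver G E J × E) :=
  lift (Module.toAddMonoidEnd E _)
    (fun k => show _ →+ _ from
      { toFun x := (var k * x.1 + if k = j then of (χ x.2 • 1) else 0, 0)
        map_zero' := by simp
        map_add' x y := by split_ifs <;> simp [mul_add, add_smul, add_add_add_comm] })
    fun k g => by
      ext x : 1
      change (var k * (of (g • 1) * x.1) + _, (0 : E)) =
        (of (g • 1) * (var k * x.1 + _), (g • 1 : E) * 0)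
      split_ifs <;>
        simp [← mul_assoc, mul_add, var_mul_of_smul_one, mul_smul, ← map_mul]

theorem transductionAction_of (a : E) (x : FreeRingOver G E J × E) :
    transductionAction j χ (of a) x = (of a * x.1, a * x.2) :=
  DFunLike.congr_fun (lift_of _ a) x

theorem transductionAction_var (k : J) (x : FreeRingOver G E J × E) :
    transductionAction j χ (var k) x =
      (var k * x.1 + if k = j then of (χ x.2 • 1) else 0, 0) :=
  DFunLike.congr_fun (lift_var _ k) x

theorem transductionAction_apply_zero (r s : FreeRingOver G E J) :
    transductionAction j χ r (s, 0) = (r * s, 0) := by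
  induction r using induction_on generalizing s with
  | of a => simp [transductionAction_of]
  | var k => simp [transductionAction_var]
  | add r r' hr hr' =>
    rw [map_add]
    exact (congrArg₂ (· + ·) (hr s) (hr' s)).trans (by simp [add_mul])
  | mul r r' hr hr' => simp [hr, hr', mul_assoc]

theorem transductionAction_snd (r : FreeRingOver G E J) (x : FreeRingOver G E J × E) :
    (transductionAction j χ r x).2 = augmentation r * x.2 := by
  induction r using induction_on generalizing x with
  | of a => simp [transductionAction_of]
  | var k => simp [transductionAction_var]
  | add r r' hr hr' =>
    rw [map_add, map_add, add_mul, ← hr, ← hr']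
    rfl
  | mul r r' hr hr' => simp [hr, hr', mul_assoc]

/-- The right transduction of `FreeRingOver G E J` along `V_j` and the functional `χ`: the additive
map that sends `r * V_j * a` to `r * (χ a • 1)` and kills `E` and `r * V_k * a` for `k ≠ j`. -/
def transduction : FreeRingOver G E J →+ FreeRingOver G E J :=
  (AddMonoidHom.fst _ E).comp
    ((AddMonoidHom.eval (0, 1)).comp (transductionAction j χ).toAddMonoidHom)

theorem transduction_apply (r : FreeRingOver G E J) :
    transduction j χ r = (transductionAction j χ r (0, 1)).1 := rfl

@[simp]
theorem transduction_of (a : E) : transduction j χ (of a) = 0 := by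
  simp [transduction_apply, transductionAction_of]

theorem transduction_var_mul_of (k : J) (a : E) :
    transduction j χ (var k * of a) = if k = j then of (χ a • 1) else 0 := by
  simp [transduction_apply, transductionAction_of, transductionAction_var]

theorem transduction_mul (r : FreeRingOver G E J) {s : FreeRingOver G E J}
    (hs : augmentation s = 0) : transduction j χ (r * s) = r * transduction j χ s := by
  have h : transductionAction j χ s (0, 1) = (transduction j χ s, 0) :=
    Prod.ext rfl (by rw [transductionAction_snd, hs, zero_mul])
  rw [transduction_apply, map_mul]
  exact congrArg Prod.fst ((congrArg _ h).trans (transductionAction_apply_zero j χ r _))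

theorem augmentation_transduction_mul {r s : FreeRingOver G E J} (hr : augmentation r = 0)
    (hs : augmentation s = 0) : augmentation (transduction j χ (r * s)) = 0 := by
  rw [transduction_mul j χ r hs, map_mul, hr, zero_mul]

end Transduction

section Span

theorem sub_of_augmentation_mem_span (r : FreeRingOver G E J) :
    r - of (augmentation r) ∈ Submodule.span (FreeRingOver G E J)
      (Set.range fun p : J × E => var p.1 * of p.2) := by
  have mem_mul_of {s : FreeRingOver G E J} (a : E) (hs : s ∈ Submodule.span (FreeRingOver G E J)
      (Set.range fun p : J × E => var p.1 * of p.2)) : s * of a ∈ Submodule.span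
      (FreeRingOver G E J) (Set.range fun p : J × E => var p.1 * of p.2) := by
    induction hs using Submodule.span_induction with
    | mem s hs =>
      obtain ⟨⟨j, c⟩, rfl⟩ := hs
      exact Submodule.subset_span ⟨(j, c * a), by simp [mul_assoc]⟩
    | zero => simp
    | add s t _ _ hs ht => simpa only [add_mul] using add_mem hs ht
    | smul r s _ hs => simpa only [smul_mul_assoc] using Submodule.smul_mem _ r hs
  induction r using induction_on with
  | of a => simp
  | var j => exact Submodule.subset_span ⟨(j, 1), by simp⟩
  | add r s hr hs => simpa [add_sub_add_comm] using add_mem hr hs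
  | mul r s hr hs =>
    have := add_mem (Submodule.smul_mem _ r hs) (mem_mul_of (augmentation s) hr)
    simpa [mul_sub, sub_mul] using this

@[elab_as_elim]
theorem induction_on_mul_var {P : FreeRingOver G E J → Prop} (r : FreeRingOver G E J)
    (of : ∀ a, P (of a))
    (mul_var : ∀ r j (a : E), P (r * (var j * FreeRingOver.of a : FreeRingOver G E J)))
    (add : ∀ r s, P r → P s → P (r + s)) : P r := by
  rw [← add_sub_cancel (FreeRingOver.of (augmentation r)) r]
  refine add _ _ (of _) ?_
  refine Submodule.closure_induction (p := fun s _ => P s) (by simpa using of 0)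
    (fun s t _ _ => add s t) (fun s t ht => ?_) (sub_of_augmentation_mem_span r)
  obtain ⟨⟨j, a⟩, rfl⟩ := ht
  exact mul_var s j a

variable [IsScalarTower G E E] {ι : Type*} (b : Module.Basis ι G E)

theorem var_mul_of_mem_span (j : J) (a : E) :
    (var j * of a : FreeRingOver G E J) ∈ Submodule.span (FreeRingOver G E J)
      (Set.range fun p : J × ι => var p.1 * of (b p.2)) := by
  induction b.mem_span a using Submodule.span_induction with
  | mem a ha =>
    obtain ⟨i, rfl⟩ := ha
    exact Submodule.subset_span ⟨(j, i), rfl⟩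
  | zero => simp
  | add a c _ _ ha hc => simpa only [map_add, mul_add] using add_mem ha hc
  | smul g a _ ha =>
    rw [← smul_one_mul, map_mul, ← mul_assoc, var_mul_of_smul_one, mul_assoc]
    exact Submodule.smul_mem _ _ ha

theorem exists_eq_of_augmentation_add_sum (r : FreeRingOver G E J) :
    ∃ c : J × ι →₀ FreeRingOver G E J,
      r = of (augmentation r) + c.sum fun p s => s * (var p.1 * of (b p.2)) := by
  have h : r - of (augmentation r) ∈ Submodule.span (FreeRingOver G E J)
      (Set.range fun p : J × ι => var p.1 * of (b p.2)) := by
    refine Submodule.span_le.2 ?_ (sub_of_augmentation_mem_span r)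
    rintro _ ⟨⟨j, a⟩, rfl⟩
    exact var_mul_of_mem_span b j a
  obtain ⟨c, hc⟩ := (Finsupp.mem_span_range_iff_exists_finsupp).1 h
  exact ⟨c, eq_add_of_sub_eq' hc.symm⟩

theorem transduction_coord_sum [DecidableEq J] (c : J × ι →₀ FreeRingOver G E J) (j : J) (i : ι) :
    transduction j (b.coord i) (c.sum fun p s => s * (var p.1 * of (b p.2))) = c (j, i) := by
  classical
  have h (p : J × ι) (s : FreeRingOver G E J) : transduction j (b.coord i)
      (s * (var p.1 * of (b p.2))) = if p = (j, i) then s else 0 := by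
    rw [transduction_mul _ _ _ (by simp), transduction_var_mul_of, b.coord_apply, b.repr_self,
      Finsupp.single_apply]
    obtain ⟨k, l⟩ := p
    by_cases hk : k = j <;> by_cases hl : l = i <;> simp [hk, hl]
  rw [map_finsuppSum, Finsupp.sum_eq_single (j, i) (fun p _ hp => (h p _).trans (if_neg hp))
    fun _ => (h _ _).trans (ite_self _)]
  exact (h _ _).trans (if_pos rfl)

theorem exists_transduction_ne_zero [DecidableEq J] {r : FreeRingOver G E J} (hr : r ≠ 0)
    (hr0 : augmentation r = 0) : ∃ j, ∃ χ : E →ₗ[G] G, transduction j χ r ≠ 0 := by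
  let b := Module.Basis.ofVectorSpace G E
  obtain ⟨c, hc⟩ := exists_eq_of_augmentation_add_sum b r
  rw [hr0, map_zero, zero_add] at hc
  obtain ⟨⟨j, i⟩, hp⟩ := Finsupp.ne_iff.1 fun h : c = 0 =>
    hr (by rw [hc, h, Finsupp.sum_zero_index])
  exact ⟨j, b.coord i, by rwa [hc, transduction_coord_sum]⟩

end Span

/-- The homomorphism `FreeRingOver G E J →+* (FreeRingOver G E J)[X]` that encodes the grading in
which every indeterminate has degree `1`. -/
noncomputable def grading : FreeRingOver G E J →+* (FreeRingOver G E J)[X] :=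
  lift (C.comp of) (fun j => C (var j) * X) fun j g => by
    rw [RingHom.comp_apply, mul_assoc, X_mul_C, ← mul_assoc, ← mul_assoc, ← C_mul, ← C_mul,
      var_mul_of_smul_one]

@[simp]
theorem grading_of (a : E) : grading (of a : FreeRingOver G E J) = C (of a) := lift_of _ a

@[simp]
theorem grading_var (j : J) : grading (var j : FreeRingOver G E J) = C (var j) * X := lift_var _ j

theorem grading_injective : Function.Injective (grading : FreeRingOver G E J →+* _) := by
  have h : (eval₂RingHom' (RingHom.id (FreeRingOver G E J)) 1 fun _ => Commute.one_right _).comp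
      grading = RingHom.id _ := by
    ext <;> simp [eval₂RingHom']
  exact Function.LeftInverse.injective (DFunLike.congr_fun h)

theorem coeff_zero_grading (r : FreeRingOver G E J) :
    (grading r).coeff 0 = of (augmentation r) :=
  DFunLike.congr_fun (f := constantCoeff.comp grading) (g := of.comp augmentation)
    (by ext <;> simp) r

theorem isHomogeneousFor_coeff (r : FreeRingOver G E J) (d : ℕ) :
    IsHomogeneousFor grading d ((grading r).coeff d) := by
  induction r using induction_on generalizing d with
  | of a =>
    obtain rfl | hd := eq_or_ne d 0
    · simp [IsHomogeneousFor]
    · simpa [coeff_C, hd] using .zero (grading (G := G)) d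
  | var j =>
    obtain rfl | hd := eq_or_ne d 1
    · simp [IsHomogeneousFor, C_mul_X_eq_monomial]
    · simpa [coeff_X, hd.symm] using .zero (grading (G := G)) d
  | add r s hr hs => simpa using (hr d).add (hs d)
  | mul r s hr hs =>
    rw [map_mul, coeff_mul]
    refine Finset.sum_induction _ _ (fun _ _ => .add) (.zero _ _) fun x hx => ?_
    rw [← Finset.HasAntidiagonal.mem_antidiagonal.1 hx]
    exact (hr x.1).mul (hs x.2)

theorem coeff_grading_transduction [IsScalarTower G E E] [DecidableEq J] (j : J) (χ : E →ₗ[G] G)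
    (r : FreeRingOver G E J) (d : ℕ) :
    (grading (transduction j χ r)).coeff d = transduction j χ ((grading r).coeff (d + 1)) := by
  induction r using induction_on_mul_var with
  | of a => simp
  | mul_var r k a =>
    rw [transduction_mul _ _ _ (by simp), transduction_var_mul_of, map_mul, map_mul, map_mul,
      grading_var, grading_of, mul_assoc, X_mul_C, ← mul_assoc, ← mul_assoc, coeff_mul_X,
      mul_assoc, ← C_mul, coeff_mul_C, transduction_mul _ _ _ (by simp), transduction_var_mul_of]
    split_ifs <;> simp
  | add r s hr hs => simp [hr, hs]

theorem hasTransductions_grading [IsScalarTower G E E] :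
    HasTransductions (grading : FreeRingOver G E J →+* _) where
  injective := grading_injective
  homogeneous_coeff := isHomogeneousFor_coeff
  isUnit {r} hr h := by
    have hr' : r = of (augmentation r) := by rw [← coeff_zero_grading, h.coeff]
    rw [hr'] at hr ⊢
    exact (isUnit_iff_ne_zero.2 fun h0 => hr (by rw [h0, map_zero])).map of
  exists_transduction {d z} hz h := by
    classical
    have aug_eq_zero {e : ℕ} {y : FreeRingOver G E J} (hy : IsHomogeneousFor grading (e + 1) y) :
        augmentation y = 0 := by
      have : (of (augmentation y) : FreeRingOver G E J) = 0 := by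
        rw [← coeff_zero_grading, hy, coeff_monomial, if_neg (Nat.succ_ne_zero e)]
      simpa using congrArg augmentation this
    obtain ⟨j, χ, hχ⟩ := exists_transduction_ne_zero hz (aug_eq_zero h)
    refine ⟨transduction j χ, hχ, fun {e y} hy => ?_, fun hy r => ?_⟩
    · ext i
      rw [coeff_grading_transduction, hy, coeff_monomial, coeff_monomial,
        apply_ite (transduction j χ), map_zero]
      simp
    · exact transduction_mul j χ r (aug_eq_zero hy)

instance [IsScalarTower G E E] : IsSylvesterDomain (FreeRingOver G E J) :=
  hasTransductions_grading.isSylvesterDomain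

end FreeRingOver

end FreeRingOver

section Fullness

variable {E : Type*} [DivisionRing E] {κ ρ : Type*} [Fintype κ] [Fintype ρ]

theorem exists_vecMul_eq_zero_of_card_lt (X : Matrix κ ρ E)
    (h : Fintype.card ρ < Fintype.card κ) : ∃ p ≠ 0, p ᵥ* X = 0 := by
  have hker : LinearMap.ker X.vecMulLinear ≠ ⊥ :=
    LinearMap.ker_ne_bot_of_finrank_lt (by simpa using h)
  obtain ⟨p, hp, hp0⟩ := Submodule.exists_mem_ne_zero_of_ne_bot hker
  exact ⟨p, hp0, hp⟩

theorem exists_mulVec_eq_zero_of_card_lt (Y : Matrix ρ κ E)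
    (h : Fintype.card ρ < Fintype.card κ) : ∃ q ≠ 0, Y *ᵥ q = 0 := by
  obtain ⟨p, hp, hp0⟩ := exists_vecMul_eq_zero_of_card_lt (Yᵀ.map MulOpposite.op) h
  refine ⟨MulOpposite.unop ∘ p, fun h => hp ?_, ?_⟩
  · exact funext fun j => MulOpposite.unop_injective (congrFun h j)
  · ext k
    simpa [Matrix.vecMul, Matrix.mulVec, dotProduct] using
      congrArg MulOpposite.unop (congrFun hp0 k)

namespace FreeRingOver

variable {G J : Type*} [DivisionRing G] [Module G E] [IsScalarTower G E E] [DecidableEq J]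

-- In a factorization `N = X * Y` through fewer indices, some `p ≠ 0` and `q ≠ 0` make `p X` and
-- `Y q` vanish under the augmentation, and a transduction followed by the augmentation kills
-- products of two such elements.
theorem isFull_of_transduction (N : Matrix κ κ (FreeRingOver G E J))
    (h : ∀ p q : κ → E, p ≠ 0 → q ≠ 0 → p ᵥ* N.map augmentation = 0 →
      N.map augmentation *ᵥ q = 0 → ∃ (j : J) (χ : E →ₗ[G] G),
        augmentation (transduction j χ ((of ∘ p) ⬝ᵥ (N *ᵥ (of ∘ q)))) ≠ 0) : IsFull N := by
  rintro r ⟨X, Y, rfl⟩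
  by_contra! hr
  obtain ⟨p, hp, hpX⟩ := exists_vecMul_eq_zero_of_card_lt (X.map augmentation) (by simpa using hr)
  obtain ⟨q, hq, hYq⟩ := exists_mulVec_eq_zero_of_card_lt (Y.map augmentation) (by simpa using hr)
  obtain ⟨j, χ, hne⟩ := h p q hp hq
    (by rw [Matrix.map_mul, ← vecMul_vecMul, hpX, zero_vecMul])
    (by rw [Matrix.map_mul, ← mulVec_mulVec, hYq, mulVec_zero])
  have aug_of (p : κ → E) : (augmentation : FreeRingOver G E J →+* E) ∘ (of ∘ p) = p := by
    ext; simp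
  have hpX' (k) : augmentation (((of ∘ p) ᵥ* X) k) = 0 := by
    rw [RingHom.map_vecMul, aug_of, hpX, Pi.zero_apply]
  have hYq' (k) : augmentation ((Y *ᵥ (of ∘ q)) k) = 0 := by
    rw [RingHom.map_mulVec, aug_of, hYq, Pi.zero_apply]
  rw [← mulVec_mulVec, dotProduct_mulVec, dotProduct, map_sum, map_sum] at hne
  exact hne (Finset.sum_eq_zero fun k _ => augmentation_transduction_mul j χ (hpX' k) (hYq' k))

theorem augmentation_transduction_of_mul_var_mul_of (j k : J) (χ : E →ₗ[G] G) (a b : E) :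
    augmentation (transduction j χ (of a * var k * of b)) = if k = j then a * (χ b • 1) else 0 := by
  rw [mul_assoc, transduction_mul _ _ _ (by simp), transduction_var_mul_of]
  split_ifs <;> simp

end FreeRingOver

end Fullness

section Independence

variable {G E κ : Type*} [DivisionRing G] [DivisionRing E] [Module G E]

theorem exists_linearMap_apply_eq_ite [Finite κ] [DecidableEq κ] {y : κ → E}
    (hy : LinearIndependent G y) (k : κ) :
    ∃ χ : E →ₗ[G] G, ∀ l, χ (y l) = if l = k then 1 else 0 := by
  cases nonempty_fintype κ
  obtain ⟨f, hf⟩ := LinearMap.exists_leftInverse_of_injective (Fintype.linearCombination G y)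
    (LinearMap.ker_eq_bot.2 (linearIndependent_iff_injective_fintypeLinearCombination.1 hy))
  refine ⟨LinearMap.proj k ∘ₗ f, fun l => ?_⟩
  have hl : f (y l) = Pi.single l 1 := by
    simpa using LinearMap.congr_fun hf (Pi.single l 1)
  simp [hl, Pi.single_apply, eq_comm]

variable [IsScalarTower G E E]

theorem linearIndependent_mul_right {y : κ → E} (hy : LinearIndependent G y) {a : E} (ha : a ≠ 0) :
    LinearIndependent G fun k => y k * a :=
  hy.map' (LinearMap.mulRight G a) (LinearMap.ker_eq_bot.2 (mul_left_injective₀ ha))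

namespace FreeRingOver

variable [Fintype κ]

theorem isFull_var_mul_of {x : κ → E} (hx : LinearIndependent G x) :
    IsFull (Matrix.of fun i j => var j * of (x i) : Matrix κ κ (FreeRingOver G E κ)) := by
  classical
  refine isFull_of_transduction _ fun p q hp hq _ _ => ?_
  obtain ⟨i, hi⟩ := Function.ne_iff.1 hp
  obtain ⟨j, hj⟩ := Function.ne_iff.1 hq
  obtain ⟨χ, hχ⟩ := exists_linearMap_apply_eq_ite (linearIndependent_mul_right hx hj) i
  have hterm (k l) : augmentation (transduction j χ (of (p k) * (var l * of (x k) * of (q l)))) =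
      if l = j then p k * (χ (x k * q l) • 1) else 0 := by
    rw [mul_assoc, ← map_mul, ← mul_assoc, augmentation_transduction_of_mul_var_mul_of]
  refine ⟨j, χ, ?_⟩
  simpa [dotProduct, Matrix.mulVec, Finset.mul_sum, map_sum, hterm, hχ] using hi

theorem isFull_of_mul_var {y : κ → E} (hy : ∀ g : κ → G, ∑ k, y k * (g k • 1) = 0 → g = 0) :
    IsFull (Matrix.of fun i j => of (y j) * var i : Matrix κ κ (FreeRingOver G E κ)) := by
  classical
  refine isFull_of_transduction _ fun p q hp hq _ _ => ?_
  obtain ⟨i, hi⟩ := Function.ne_iff.1 hp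
  obtain ⟨j, hj⟩ := Function.ne_iff.1 hq
  obtain ⟨χ, hχ⟩ := Module.Projective.exists_dual_ne_zero G hj
  have hterm (k l) : augmentation (transduction i χ (of (p k) * (of (y l) * var k * of (q l)))) =
      if k = i then p k * (y l * (χ (q l) • 1)) else 0 := by
    rw [← mul_assoc, ← mul_assoc, ← map_mul, augmentation_transduction_of_mul_var_mul_of,
      mul_assoc]
  refine ⟨i, χ, fun h => hχ (congrFun (hy (fun k => χ (q k)) ?_) j)⟩
  refine (mul_eq_zero.1 ?_).resolve_left hi
  simpa [dotProduct, Matrix.mulVec, Finset.mul_sum, map_sum, hterm, hχ] using h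

end FreeRingOver

end Independence

namespace FreeRingOver

variable {G E J : Type*} [DivisionRing G] [DivisionRing E] [Module G E]

theorem commute_var_of_smul_one (j : J) (g : G) :
    Commute (var j : FreeRingOver G E J) (of (g • 1)) :=
  var_mul_of_smul_one j g

/-- The automorphism of `FreeRingOver G E J` that permutes the indeterminates. -/
def permute (π : Equiv.Perm J) : FreeRingOver G E J ≃+* FreeRingOver G E J :=
  RingEquiv.ofRingHom (lift of (var ∘ π) fun _ => var_mul_of_smul_one _)
    (lift of (var ∘ π.symm) fun _ => var_mul_of_smul_one _) (by ext <;> simp) (by ext <;> simp)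

@[simp]
theorem permute_of (π : Equiv.Perm J) (a : E) :
    permute π (of a : FreeRingOver G E J) = of a := lift_of _ a

@[simp]
theorem permute_var (π : Equiv.Perm J) (j : J) :
    permute π (var j : FreeRingOver G E J) = var (π j) := lift_var _ j

/-- The endomorphism of `FreeRingOver G E (Fin 2)` with `V₀ ↦ V₀ + c V₁` and `V₁ ↦ V₁`. -/
def shearHom (c : E) (hc : ∀ g : G, Commute c (g • 1)) :
    FreeRingOver G E (Fin 2) →+* FreeRingOver G E (Fin 2) :=
  lift of ![var 0 + of c * var 1, var 1] fun j g => by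
    fin_cases j
    · exact (commute_var_of_smul_one 0 g).add_left
        (((hc g).map of).mul_left (commute_var_of_smul_one 1 g))
    · exact var_mul_of_smul_one _ g

/-- The automorphism of `FreeRingOver G E (Fin 2)` with `V₀ ↦ V₀ + c V₁` and `V₁ ↦ V₁`. -/
def shear (c : E) (hc : ∀ g : G, Commute c (g • 1)) :
    FreeRingOver G E (Fin 2) ≃+* FreeRingOver G E (Fin 2) :=
  RingEquiv.ofRingHom (shearHom c hc) (shearHom (-c) fun g => (hc g).neg_left)
    (hom_ext (by simp [shearHom]) (Fin.forall_fin_two.2 (by simp [shearHom])))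
    (hom_ext (by simp [shearHom]) (Fin.forall_fin_two.2 (by simp [shearHom])))

section shear

variable (c : E) (hc : ∀ g : G, Commute c (g • 1))

@[simp]
theorem shear_of (a : E) : shear c hc (of a) = of a := lift_of _ a

@[simp]
theorem shear_var_zero : shear c hc (var 0) = var 0 + of c * var 1 := lift_var _ 0

@[simp]
theorem shear_var_one : shear c hc (var 1) = var 1 := lift_var _ 1

end shear

end FreeRingOver

section FixedSubfield

variable {Q ι κ : Type*} [DivisionRing Q]

/-- The elements of `Q` fixed by all the endomorphisms `τ i`. -/
def fixedSubfield (τ : ι → Q →+* Q) : Subfield Q := ⨅ i, (τ i).eqLocusField (RingHom.id Q)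

theorem mem_fixedSubfield {τ : ι → Q →+* Q} {q : Q} :
    q ∈ fixedSubfield τ ↔ ∀ i, τ i q = q :=
  Subfield.mem_iInf

variable [Fintype κ] [DecidableEq κ] {τ : Q →+* Q} {M : Matrix κ κ Q}

theorem comp_eq_of_vecMul_map_eq (hM : IsUnit M) {y : κ → Q}
    (h : y ᵥ* M.map τ = τ ∘ (y ᵥ* M)) : τ ∘ y = y := by
  refine Matrix.vecMul_injective_of_isUnit (hM.map τ.mapMatrix) (Eq.trans ?_ h.symm)
  exact funext fun j => (RingHom.map_vecMul τ M y j).symm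

theorem comp_eq_of_map_mulVec_eq (hM : IsUnit M) {y : κ → Q}
    (h : M.map τ *ᵥ y = τ ∘ (M *ᵥ y)) : τ ∘ y = y := by
  refine Matrix.mulVec_injective_of_isUnit (hM.map τ.mapMatrix) (Eq.trans ?_ h.symm)
  exact funext fun j => (RingHom.map_mulVec τ M y j).symm

end FixedSubfield

/-- An embedding of division rings `G → F`, `g ↦ g • 1`, together with elements
`x 0 = 1, x 1, …, x (m + 1)` of `F` that are left linearly independent over `G`. -/
structure Frame (m : ℕ) : Type (u + 1) where
  /-- The ambient division ring. -/
  F : Type u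
  /-- The division ring of scalars. -/
  G : Type u
  [divisionRingF : DivisionRing F]
  [divisionRingG : DivisionRing G]
  [module : Module G F]
  [isScalarTower : IsScalarTower G F F]
  /-- The independent family. -/
  x : Fin (m + 2) → F
  x_zero : x 0 = 1
  linearIndependent : LinearIndependent G x

namespace Frame

attribute [instance] divisionRingF divisionRingG module isScalarTower

variable {m : ℕ}

/-- A morphism of frames: a pair of ring homomorphisms compatible with the scalar multiplications
and the distinguished families. -/
structure Hom (A B : Frame.{u} m) where
  /-- The homomorphism of ambient division rings. -/
  toF : A.F →+* B.F
  /-- The homomorphism of scalars. -/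
  toG : A.G →+* B.G
  map_smul : ∀ g f, toF (g • f) = toG g • toF f
  map_x : ∀ k, toF (A.x k) = B.x k

/-- Composition of morphisms of frames. -/
def Hom.comp {A B C : Frame.{u} m} (h' : Hom B C) (h : Hom A B) : Hom A C where
  toF := h'.toF.comp h.toF
  toG := h'.toG.comp h.toG
  map_smul g f := by simp [h.map_smul, h'.map_smul]
  map_x k := by simp [h.map_x, h'.map_x]

section Twist

variable (A : Frame.{u} m) {Q : Type u} [DivisionRing Q] (e : A.F →+* Q) (w : Qˣ)

/-- The embedding of the ambient division ring of `A` into `Q` obtained from `e` by conjugation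
with `w`. -/
def twistHom : A.F →+* Q :=
  (MulSemiringAction.toRingHom (ConjAct Qˣ) Q (ConjAct.toConjAct w)).comp e

variable (K : Subfield Q)

/-- The frame in `Q` over the subfield `K` formed by the images of the family of `A` under `e`
conjugated with `w`. -/
def twist (li : ∀ g : Fin (m + 2) → K, ∑ k, (g k : Q) * (w * e (A.x k)) = 0 → g = 0) :
    Frame.{u} m where
  F := Q
  G := K
  x k := A.twistHom e w (A.x k)
  x_zero := by rw [A.x_zero, map_one]
  linearIndependent := Fintype.linearIndependent_iff.2 fun g hg => congrFun (li g (by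
    rw [← Units.mul_left_eq_zero w⁻¹, Finset.sum_mul, ← hg]
    exact Finset.sum_congr rfl fun k _ => mul_assoc _ _ _))

variable {A e w K}

/-- The morphism from `A` to its twist by `e` and `w`. -/
def homTwist (li) (hK : ∀ g : A.G, e (g • 1) ∈ K)
    (hw : ∀ g : A.G, Commute (w : Q) (e (g • 1))) : Hom A (A.twist e w K li) where
  toF := A.twistHom e w
  toG := (e.comp (RingHom.smulOneHom (R := A.G) (S := A.F))).codRestrict K hK
  map_smul g f := by
    change (w : Q) * e (g • f) * ↑w⁻¹ = e (g • 1) * (w * e f * ↑w⁻¹)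
    rw [← smul_one_mul g f, map_mul, ← mul_assoc, (hw g).eq, mul_assoc, mul_assoc, mul_assoc]
  map_x _ := rfl

end Twist

end Frame

section PermutedCopies

variable {F Q κ : Type*} [Ring F] [DivisionRing Q] [Fintype κ] [DecidableEq κ]
  {e : F →+* Q} {w : κ → Q} {x : κ → F} {τ : Equiv.Perm κ → Q →+* Q}

theorem exists_fixedSubfield_sum_eq (hτe : ∀ π f, τ π (e f) = e f)
    (hτw : ∀ π j, τ π (w j) = w (π j)) (hM : IsUnit (Matrix.of fun i j => w j * e (x i))) (f : F) :
    ∃ y : κ → fixedSubfield τ, ∀ j, ∑ i, (y i : Q) * (w j * e (x i)) = w j * e f := by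
  obtain ⟨y, hy⟩ := Matrix.vecMul_surjective_iff_exists_left_inverse.2 hM.exists_left_inv
    fun j => w j * e f
  have hy (j) : ∑ i, y i * (w j * e (x i)) = w j * e f := congrFun hy j
  have hfix (π) : τ π ∘ y = y := by
    refine comp_eq_of_vecMul_map_eq hM (funext fun j => ?_)
    change ∑ i, y i * τ π (w j * e (x i)) = τ π (∑ i, y i * (w j * e (x i)))
    simp only [hy, map_mul, hτe, hτw]
  exact ⟨fun i => ⟨y i, mem_fixedSubfield.2 fun π => congrFun (hfix π) i⟩, hy⟩

theorem eq_zero_of_sum_fixedSubfield_mul_eq_zero (hτe : ∀ π f, τ π (e f) = e f)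
    (hτw : ∀ π j, τ π (w j) = w (π j)) (hM : IsUnit (Matrix.of fun i j => w j * e (x i)))
    {y : κ → fixedSubfield τ} {j : κ} (hy : ∑ i, (y i : Q) * (w j * e (x i)) = 0) : y = 0 := by
  have hy' : (fun i => (y i : Q)) ᵥ* (Matrix.of fun i j => w j * e (x i)) = 0 := by
    ext l
    change ∑ i, (y i : Q) * (w l * e (x i)) = 0
    simpa [hτe, hτw, mem_fixedSubfield.1 (y _).2] using congrArg (τ (Equiv.swap j l)) hy
  have := Matrix.vecMul_injective_of_isUnit hM (hy'.trans (Matrix.zero_vecMul _).symm)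
  exact funext fun i => Subtype.ext (congrFun this i)

end PermutedCopies

open FreeRingOver in
theorem Frame.exists_hom_mem_span {m : ℕ} (A : Frame.{u} m) :
    ∃ (B : Frame.{u} m) (h : Hom A B), ∀ f, h.toF f ∈ Submodule.span B.G (Set.range B.x) := by
  obtain ⟨Q, _, θ, hθ, hlift⟩ := exists_universal_divisionRing (FreeRingOver A.G A.F (Fin (m + 2)))
  choose τ hτ using fun π => hlift (permute π)
  let e : A.F →+* Q := θ.comp of
  let w (j : Fin (m + 2)) : Q := θ (var j)
  have hτe (π f) : τ π (e f) = e f := by simp [e, hτ]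
  have hτw (π j) : τ π (w j) = w (π j) := by simp [w, hτ]
  have hM : IsUnit (Matrix.of fun i j => w j * e (A.x i)) := by
    convert hθ.isUnit_map (isFull_var_mul_of A.linearIndependent)
    ext
    simp [w, e]
  have hw : IsUnit (w 0) := isUnit_iff_ne_zero.2 fun h => one_ne_zero <|
    eq_zero_of_sum_fixedSubfield_mul_eq_zero hτe hτw hM (y := 1) (j := 0) (by simp [h])
  have hcomm (g : A.G) : Commute (w 0) (e (g • 1)) :=
    (commute_var_of_smul_one 0 g).map θ
  refine ⟨A.twist e hw.unit (fixedSubfield τ) fun _ =>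
    eq_zero_of_sum_fixedSubfield_mul_eq_zero hτe hτw hM,
    homTwist _ (fun g => mem_fixedSubfield.2 fun π => hτe π _) hcomm, fun f => ?_⟩
  obtain ⟨y, hy⟩ := exists_fixedSubfield_sum_eq hτe hτw hM f
  refine Submodule.mem_span_range_iff_exists_fun _ |>.2 ⟨y, ?_⟩
  change ∑ i, (y i : Q) * (w 0 * e (A.x i) * (hw.unit⁻¹ : Qˣ)) = w 0 * e f * (hw.unit⁻¹ : Qˣ)
  rw [← hy 0, Finset.sum_mul]
  simp only [mul_assoc]

section Laurent

open scoped LaurentSeries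

open HahnSeries

variable {F G : Type*} [DivisionRing F] [DivisionRing G] [Module G F] {n : ℕ} [NeZero n]

theorem isUnit_or_eq_zero_laurentSeries (f : F⸨X⸩) : IsUnit f ∨ f = 0 := by
  refine or_iff_not_imp_right.2 fun hf => ?_
  have hX : IsUnit (single f.order (1 : F)) :=
    isUnit_iff_exists.2 ⟨single (-f.order) 1, by simp, by simp⟩
  have hu : IsUnit f.powerSeriesPart := by
    rw [PowerSeries.isUnit_iff_constantCoeff, ← PowerSeries.coeff_zero_eq_constantCoeff_apply,
      LaurentSeries.powerSeriesPart_coeff, isUnit_iff_ne_zero, Nat.cast_zero, add_zero]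
    exact coeff_order_eq_zero.not.2 hf
  rw [← LaurentSeries.single_order_mul_powerSeriesPart f]
  exact hX.mul (hu.map (ofPowerSeries ℤ F))

/-- The division ring of Laurent series in a central variable over a division ring. -/
noncomputable abbrev laurentSeriesDivisionRing (F : Type*) [DivisionRing F] : DivisionRing F⸨X⸩ :=
  .ofIsUnitOrEqZero isUnit_or_eq_zero_laurentSeries

attribute [local instance] laurentSeriesDivisionRing

section IsScalarTower

variable [IsScalarTower G F F]

theorem smul_eq_C_mul (g : G) (f : F⸨X⸩) : g • f = C (g • 1 : F) * f := by
  ext k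
  rw [C_mul_eq_smul, coeff_smul, coeff_smul, smul_eq_mul, smul_one_mul]

theorem smul_one_eq_C (g : G) : (g • 1 : F⸨X⸩) = C (g • 1 : F) := by
  rw [smul_eq_C_mul, mul_one]

instance : IsScalarTower G F⸨X⸩ F⸨X⸩ where
  smul_assoc g f h := by
    rw [smul_eq_C_mul, smul_eq_mul, smul_eq_mul, mul_assoc, ← smul_eq_C_mul]

end IsScalarTower

/-- The central elements `0, X, X ^ 2, …` of the ring of Laurent series. -/
noncomputable def centralPow (F : Type*) [DivisionRing F] (j : Fin n) : F⸨X⸩ :=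
  if j = 0 then 0 else single (j : ℤ) 1

theorem centralPow_zero (F : Type*) [DivisionRing F] : centralPow F (0 : Fin n) = 0 := if_pos rfl

theorem commute_centralPow_C (j : Fin n) (a : F) : Commute (centralPow F j) (C a) := by
  rw [centralPow]
  split_ifs
  · exact Commute.zero_left _
  · simp [Commute, SemiconjBy, C_apply]

theorem coeff_mul_centralPow_mul_C (f : F⸨X⸩) (j : Fin n) (a : F) (k : ℤ) :
    (f * centralPow F j * C a).coeff k = if j = 0 then 0 else f.coeff (k - j) * a := by
  rw [C_apply, coeff_mul_single_zero, centralPow]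
  split_ifs with hj
  · simp
  · nth_rw 1 [← sub_add_cancel k j]
    rw [coeff_mul_single_add, mul_one]

theorem exists_coeff_ne_zero_minimal {κ : Type*} [Finite κ] {p : κ → F⸨X⸩} (hp : p ≠ 0) :
    ∃ (i : κ) (a : ℤ), (p i).coeff a ≠ 0 ∧ ∀ l, ∀ k < a, (p l).coeff k = 0 := by
  obtain ⟨l, hl⟩ := Function.ne_iff.1 hp
  obtain ⟨i, hi, hmin⟩ := Set.exists_min_image {i | p i ≠ 0} (fun i => (p i).order)
    (Set.toFinite _) ⟨l, hl⟩
  refine ⟨i, (p i).order, coeff_order_eq_zero.not.2 hi, fun l k hk => ?_⟩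
  by_cases hl : p l = 0
  · rw [hl, coeff_zero]
  · exact coeff_eq_zero_of_lt_order (hk.trans_le (hmin l hl))

variable [IsScalarTower G F F]

theorem exists_sum_mul_centralPow_ne_zero {x : Fin n → F} (hx : LinearIndependent G x)
    {p r : Fin n → F⸨X⸩} (hp : p ≠ 0) {j : Fin n} (hj : j ≠ 0) (hr : r j ≠ 0) :
    ∃ χ : F⸨X⸩ →ₗ[G] G, ∑ i, ∑ j, p i * centralPow F j * (χ (C (x i) * r j) • 1) ≠ 0 := by
  obtain ⟨b, hb⟩ : ∃ b, (r j).coeff b ≠ 0 := by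
    by_contra! h
    exact hr (HahnSeries.ext (funext h))
  obtain ⟨j₀, ⟨hj₀, hb₀⟩, hmin⟩ := exists_minimal_of_wellFoundedLT
    (fun j : Fin n => j ≠ 0 ∧ (r j).coeff b ≠ 0) ⟨j, hj, hb⟩
  obtain ⟨i₀, a, hi₀, ha⟩ := exists_coeff_ne_zero_minimal hp
  obtain ⟨χ, hχ⟩ := exists_linearMap_apply_eq_ite (linearIndependent_mul_right hx hb₀) i₀
  refine ⟨χ ∘ₗ coeff.linearMap b, fun h => hi₀ ?_⟩
  have hzero (i : Fin n) {j : Fin n} (hj : j ≠ j₀) : (p i * centralPow F j *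
      (χ ((C (x i) * r j).coeff b) • 1)).coeff (a + j₀) = 0 := by
    rw [smul_one_eq_C, coeff_mul_centralPow_mul_C]
    split_ifs with hj0
    · rfl
    obtain hlt | hlt := hj.lt_or_gt
    · have : (r j).coeff b = 0 := by
        by_contra hne
        exact hlt.not_ge (hmin ⟨hj0, hne⟩ hlt.le)
      simp [C_apply, this]
    · rw [ha i _ (by omega), zero_mul]
  have hone (i : Fin n) : (p i * centralPow F j₀ *
      (χ ((C (x i) * r j₀).coeff b) • 1)).coeff (a + j₀) = if i = i₀ then (p i).coeff a else 0 := by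
    rw [smul_one_eq_C, coeff_mul_centralPow_mul_C, if_neg hj₀, add_sub_cancel_right, C_apply,
      coeff_single_zero_mul, hχ]
    split_ifs <;> simp
  have hrow (i : Fin n) : (∑ j, p i * centralPow F j * (χ ((C (x i) * r j).coeff b) • 1)).coeff
      (a + j₀) = if i = i₀ then (p i).coeff a else 0 := by
    rw [coeff_sum, Finset.sum_eq_single j₀ (fun j _ hj => hzero i hj) (by simp), hone]
  have hsum : ∑ i, (if i = i₀ then (p i).coeff a else 0) = 0 := by
    simp only [← hrow, ← coeff_sum]
    exact congrArg (fun f => f.coeff (a + j₀)) h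
  simpa using hsum

end Laurent

section ShearMatrix

variable {κ S T : Type*} [DecidableEq κ] [Zero κ] [Ring S] [Ring T]

/-- The coefficient matrix of the linear system `∑ k, p (k, i) * x k = 0` and
`p (i, j) * z j = p (i, 0) * z 0` for `j ≠ 0` in the unknown row vector `p`. -/
def shearMatrix (x z : κ → S) : Matrix (κ × κ) (κ × κ) S :=
  Matrix.of fun r s => (if s.2 = 0 ∧ r.2 = s.1 then x r.1 else 0) +
    if r.1 = s.1 then (if r.2 = s.2 then z s.2 else 0) - (if r.2 = 0 then z 0 else 0) else 0

theorem shearMatrix_map (x z : κ → S) (f : S →+* T) :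
    (shearMatrix x z).map f = shearMatrix (f ∘ x) (f ∘ z) := by
  ext r s
  simp [shearMatrix, apply_ite f]

variable [Fintype κ]

theorem vecMul_shearMatrix_apply (x z : κ → S) (p : κ × κ → S) (i j : κ) :
    (p ᵥ* shearMatrix x z) (i, j) =
      (if j = 0 then ∑ k, p (k, i) * x k else 0) + (p (i, j) * z j - p (i, 0) * z 0) := by
  simp [shearMatrix, Matrix.vecMul, dotProduct, Fintype.sum_prod_type, mul_add, mul_sub,
    Finset.sum_add_distrib, ite_and]

theorem shearMatrix_mulVec_apply (x z : κ → S) (q : κ × κ → S) (k l : κ) :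
    (shearMatrix x z *ᵥ q) (k, l) =
      x k * q (l, 0) + (z l * q (k, l) - if l = 0 then ∑ j, z 0 * q (k, j) else 0) := by
  simp [shearMatrix, Matrix.mulVec, dotProduct, Fintype.sum_prod_type, add_mul, sub_mul,
    Finset.sum_add_distrib, ite_and]

theorem eq_of_vecMul_shearMatrix_one_eq_zero {x : κ → S} {p : κ × κ → S}
    (h : p ᵥ* shearMatrix x 1 = 0) (i j : κ) : p (i, j) = p (i, 0) := by
  obtain rfl | hj := eq_or_ne j 0
  · rfl
  · have := congrFun h (i, j)
    rw [vecMul_shearMatrix_apply, if_neg hj] at this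
    simpa [sub_eq_zero] using this

theorem eq_neg_of_shearMatrix_one_mulVec_eq_zero {x : κ → S} {q : κ × κ → S}
    (h : shearMatrix x 1 *ᵥ q = 0) (i : κ) {j : κ} (hj : j ≠ 0) :
    q (i, j) = -(x i * q (j, 0)) := by
  have := congrFun h (i, j)
  rw [shearMatrix_mulVec_apply, if_neg hj] at this
  exact eq_neg_of_add_eq_zero_right (by simpa using this)

theorem exists_ne_zero_of_shearMatrix_one_mulVec_eq_zero {x : κ → S} (hx : x 0 = 1)
    {q : κ × κ → S} (h : shearMatrix x 1 *ᵥ q = 0) (hq : q ≠ 0) : ∃ j ≠ 0, q (j, 0) ≠ 0 := by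
  by_contra! h₀
  have hne (i) {j} (hj : j ≠ 0) : q (i, j) = 0 := by
    rw [eq_neg_of_shearMatrix_one_mulVec_eq_zero h i hj, h₀ j hj, mul_zero, neg_zero]
  have h₀₀ := congrFun h (0, 0)
  rw [shearMatrix_mulVec_apply, if_pos rfl,
    Finset.sum_eq_single 0 (fun j _ hj => by rw [hne 0 hj, mul_zero]) (by simp)] at h₀₀
  refine hq (funext fun ⟨i, j⟩ => ?_)
  obtain rfl | hj := eq_or_ne j 0
  · obtain rfl | hi := eq_or_ne i 0
    · simpa [hx] using h₀₀
    · exact h₀ i hi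
  · exact hne i hj

end ShearMatrix

section ShearMatrixFull

variable {F G : Type*} [DivisionRing F] [DivisionRing G] [Module G F] [IsScalarTower G F F]

namespace FreeRingOver

theorem augmentation_transduction_of_mul_shear_mul_of (χ : F →ₗ[G] G) (a b c : F) :
    augmentation (transduction 1 χ (of a * ((1 + var 0 + of c * var 1) * of b) :
      FreeRingOver G F (Fin 2))) = a * c * (χ b • 1) := by
  have h (k : Fin 2) (d : F) := augmentation_transduction_of_mul_var_mul_of 1 k χ d b
  have h₀ := h 0 a
  have h₁ := h 1 (a * c)
  simp only [map_mul, mul_assoc] at h₀ h₁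
  simp [add_mul, mul_add, mul_assoc, h₀, h₁, ← map_mul]

theorem augmentation_transduction_of_mul_shearMatrix_mulVec {κ : Type*} [Fintype κ]
    [DecidableEq κ] [Zero κ] (χ : F →ₗ[G] G) (x : κ → F) {c : κ → F} (hc : c 0 = 0) (a : F)
    (q : κ × κ → F) (i j : κ) :
    augmentation (transduction 1 χ (of a *
      (shearMatrix (of ∘ x) (fun j => 1 + var 0 + of (c j) * var 1) *ᵥ (of ∘ q)) (i, j) :
        FreeRingOver G F (Fin 2))) = a * c j * (χ (q (i, j)) • 1) := by
  have hx : augmentation (transduction 1 χ (of a * (of (x i) * of (q (j, 0))) :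
      FreeRingOver G F (Fin 2))) = 0 := by
    rw [← map_mul, ← map_mul, transduction_of, map_zero]
  have hsum : augmentation (transduction 1 χ (of a *
      (if j = 0 then ∑ k, (1 + var 0 + of (c 0) * var 1) * of (q (i, k)) else 0) :
        FreeRingOver G F (Fin 2))) = 0 := by
    split_ifs
    · simp only [Finset.mul_sum, map_sum, augmentation_transduction_of_mul_shear_mul_of, hc,
        mul_zero, zero_mul, Finset.sum_const_zero]
    · simp only [mul_zero, map_zero]
  simp only [shearMatrix_mulVec_apply, mul_add, mul_sub, Function.comp_apply, map_add, map_sub]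
  rw [hx, hsum, zero_add, sub_zero, augmentation_transduction_of_mul_shear_mul_of]

open scoped LaurentSeries

open HahnSeries

attribute [local instance] laurentSeriesDivisionRing

variable {n : ℕ} [NeZero n] {x : Fin n → F}

theorem isFull_shearMatrix_one_add_var (hx₀ : x 0 = 1) (hx : LinearIndependent G x) :
    IsFull (shearMatrix (of ∘ C ∘ x) (fun j => 1 + var 0 + of (centralPow F j) * var 1) :
      Matrix _ _ (FreeRingOver G F⸨X⸩ (Fin 2))) := by
  refine isFull_of_transduction _ fun p q hp hq hpN hNq => ?_
  have haug : (shearMatrix (of ∘ C ∘ x) (fun j => 1 + var 0 + of (centralPow F j) * var 1) :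
      Matrix _ _ (FreeRingOver G F⸨X⸩ (Fin 2))).map augmentation = shearMatrix (C ∘ x) 1 := by
    rw [shearMatrix_map]
    congr 1 <;> ext <;> simp
  rw [haug] at hpN hNq
  have hp' (i j) : p (i, j) = p (i, 0) := eq_of_vecMul_shearMatrix_one_eq_zero hpN i j
  have hp₀ : (fun i => p (i, 0)) ≠ 0 := fun h => hp <| funext fun r =>
    (hp' r.1 r.2).trans (congrFun h r.1)
  obtain ⟨j, hj, hqj⟩ := exists_ne_zero_of_shearMatrix_one_mulVec_eq_zero (by simp [hx₀]) hNq hq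
  obtain ⟨χ, hχ⟩ := exists_sum_mul_centralPow_ne_zero hx hp₀ hj (r := fun j => q (j, 0)) hqj
  have hterm (i j) : p (i, j) * centralPow F j * (χ (q (i, j)) • 1) =
      -(p (i, 0) * centralPow F j * (χ (C (x i) * q (j, 0)) • 1)) := by
    rw [hp']
    obtain rfl | hj := eq_or_ne j 0
    · simp [centralPow_zero]
    · simp [eq_neg_of_shearMatrix_one_mulVec_eq_zero hNq i hj]
  refine ⟨1, χ, ?_⟩
  simpa only [dotProduct, Fintype.sum_prod_type, map_sum, Function.comp_apply, hterm,
    augmentation_transduction_of_mul_shearMatrix_mulVec _ (C ∘ x) (centralPow_zero F),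
    Finset.sum_neg_distrib, neg_ne_zero] using hχ

theorem isFull_shearMatrix (hx₀ : x 0 = 1) (hx : LinearIndependent G x) :
    IsFull (shearMatrix (of ∘ C ∘ x) (fun j => var 0 + of (centralPow F j) * var 1) :
      Matrix _ _ (FreeRingOver G F⸨X⸩ (Fin 2))) := by
  let f : FreeRingOver G F⸨X⸩ (Fin 2) →+* FreeRingOver G F⸨X⸩ (Fin 2) :=
    lift of ![1 + var 0, var 1] fun j g => by
      fin_cases j
      · exact (Commute.one_left _).add_left (commute_var_of_smul_one 0 g)
      · exact var_mul_of_smul_one _ g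
  refine IsFull.of_map f ?_
  rw [shearMatrix_map]
  convert isFull_shearMatrix_one_add_var hx₀ hx using 2 <;> ext <;> simp [f]

end FreeRingOver

end ShearMatrixFull

section RightIndependence

variable {F G : Type*} [DivisionRing F] [DivisionRing G] [Module G F] [IsScalarTower G F F]

theorem eq_zero_of_sum_pair_mul_smul_one_eq_zero {a : F} (ha : LinearIndependent G ![1, a])
    {g : Fin 2 → G} (hg : ∑ k, ![1, a] k * (g k • 1) = 0) : g = 0 := by
  replace hg : g 0 • 1 + a * (g 1 • 1) = 0 := by simpa using hg
  have hg₁ : g 1 = 0 := by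
    by_contra h
    have ha' : a = -((g 0 * (g 1)⁻¹) • 1) := by
      rw [← neg_smul, ← neg_mul, mul_smul, ← smul_one_mul (-g 0), neg_smul,
        neg_eq_of_add_eq_zero_right hg, mul_assoc, smul_one_mul, smul_smul, mul_inv_cancel₀ h,
        one_smul, mul_one]
    exact one_ne_zero (LinearIndependent.pair_iff.1 ha (g 0 * (g 1)⁻¹) 1 (by
      rw [one_smul, ← neg_eq_iff_add_eq_zero, ← ha'])).2
  have hg₀ : g 0 = 0 := by simpa [hg₁] using hg
  exact funext (Fin.forall_fin_two.2 ⟨hg₀, hg₁⟩)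

open scoped LaurentSeries in
theorem linearIndependent_pair_C {a : F} (ha : LinearIndependent G ![1, a]) :
    LinearIndependent G ![(1 : F⸨X⸩), HahnSeries.C a] := by
  refine LinearIndependent.pair_iff.2 fun s t h => LinearIndependent.pair_iff.1 ha s t ?_
  rwa [smul_one_eq_C, smul_eq_C_mul, ← map_mul, smul_one_mul, ← map_add,
    map_eq_zero_iff _ HahnSeries.C_injective] at h

end RightIndependence

section ShearedCopies

variable {E Q κ ι : Type*} [Ring E] [DivisionRing Q]

theorem eq_zero_of_sum_mul_inv_mul_eq_zero [Fintype κ] [DecidableEq κ] [Zero κ] {x z g : κ → Q}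
    (hM : IsUnit (shearMatrix x z)) (hz : ∀ j, z j ≠ 0)
    (h : ∀ j, ∑ k, g k * ((z j)⁻¹ * x k) = 0) : g = 0 := by
  let p (r : κ × κ) := g r.1 * (z r.2)⁻¹
  have hp : p ᵥ* shearMatrix x z = 0 := by
    ext ⟨i, j⟩
    simp [vecMul_shearMatrix_apply, p, hz, mul_assoc, h]
  have hp₀ : p = 0 := Matrix.vecMul_injective_of_isUnit hM (hp.trans (Matrix.zero_vecMul _).symm)
  exact funext fun k => (mul_eq_zero.1 (congrFun hp₀ (k, 0))).resolve_right (inv_ne_zero (hz 0))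

variable {e : E →+* Q} {v : Fin 2 → Q} {c : ι → E} {τ : ι → Q →+* Q}

theorem eq_zero_of_sum_fixedSubfield_mul_inv_mul_eq_zero [Fintype ι] [DecidableEq ι] [Zero ι]
    {x : ι → E} {z : Q} (hτe : ∀ j f, τ j (e f) = e f)
    (hM : IsUnit (shearMatrix (e ∘ x) fun j => τ j z)) (hz : z ≠ 0) {g : ι → fixedSubfield τ}
    (hg : ∑ k, (g k : Q) * (z⁻¹ * e (x k)) = 0) : g = 0 := by
  have hg' := eq_zero_of_sum_mul_inv_mul_eq_zero (g := fun k => (g k : Q)) hM (by simpa using hz)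
    fun j => by simpa [hτe, mem_fixedSubfield.1 (g _).2] using congrArg (τ j) hg
  exact funext fun k => Subtype.ext (congrFun hg' k)

theorem exists_fixedSubfield_sum_mul_eq (hτe : ∀ j f, τ j (e f) = e f)
    (hτ₀ : ∀ j, τ j (v 0) = v 0 + e (c j) * v 1) (hτ₁ : ∀ j, τ j (v 1) = v 1) {y : Fin 2 → E}
    (hM : IsUnit (Matrix.of fun a b => e (y b) * v a)) (hy : ∀ j b, Commute (c j) (y b)) {f : E}
    (hf : ∀ j, Commute (c j) f) :
    ∃ u : Fin 2 → fixedSubfield τ, ∑ b, e (y b) * v 0 * u b = e f * v 0 := by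
  obtain ⟨u, hu⟩ := Matrix.mulVec_surjective_iff_exists_right_inverse.2 hM.exists_right_inv
    fun a => e f * v a
  have hu (a) : ∑ b, e (y b) * v a * u b = e f * v a := congrFun hu a
  have hfix (j) : τ j ∘ u = u := by
    refine comp_eq_of_map_mulVec_eq hM (funext fun a => ?_)
    change ∑ b, τ j (e (y b) * v a) * u b = τ j (∑ b, e (y b) * v a * u b)
    rw [hu]
    have hcy : ∑ b, e (y b) * (e (c j) * v 1) * u b = e f * (e (c j) * v 1) := by
      simp only [← mul_assoc, ← ((hy j _).map e).eq, ← ((hf j).map e).eq]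
      simp only [mul_assoc, ← Finset.mul_sum, ← hu 1]
    fin_cases a
    · simp only [Fin.zero_eta, map_mul, hτe, hτ₀, mul_add, add_mul, Finset.sum_add_distrib, hu,
        hcy]
    · simp only [Fin.mk_one, map_mul, hτe, hτ₁, hu]
  exact ⟨fun b => ⟨u b, mem_fixedSubfield.2 fun j => congrFun (hfix j) b⟩, hu 0⟩

end ShearedCopies

theorem Frame.linearIndependent_pair {m : ℕ} (A : Frame.{u} m) :
    LinearIndependent A.G ![1, A.x 1] := by
  convert A.linearIndependent.comp ![0, 1] (by simp)
  ext k
  fin_cases k <;> simp [A.x_zero]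

open scoped LaurentSeries in
open FreeRingOver HahnSeries in
attribute [local instance] laurentSeriesDivisionRing in
theorem Frame.exists_hom_eq_smul_one_add {m : ℕ} (A : Frame.{u} m) :
    ∃ (B : Frame.{u} m) (h : Hom A B), ∀ f, ∃ s t : B.G, h.toF f = s • 1 + B.x 1 * t • 1 := by
  obtain ⟨Q, _, θ, hθ, hlift⟩ := exists_universal_divisionRing (FreeRingOver A.G A.F⸨X⸩ (Fin 2))
  have hc (j : Fin (m + 2)) (g : A.G) : Commute (centralPow A.F j) (g • 1) :=
    smul_one_eq_C (F := A.F) g ▸ commute_centralPow_C j _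
  choose τ hτ using fun j => hlift (shear (centralPow A.F j) (hc j))
  let e : A.F⸨X⸩ →+* Q := θ.comp of
  let v (a : Fin 2) : Q := θ (var a)
  have hτe (j f) : τ j (e f) = e f := by simp [e, hτ]
  have hτ₀ (j) : τ j (v 0) = v 0 + e (centralPow A.F j) * v 1 := by simp [v, e, hτ]
  have hτ₁ (j) : τ j (v 1) = v 1 := by simp [v, hτ]
  have hM : IsUnit (Matrix.of fun a b => e (![1, C (A.x 1)] b) * v a) := by
    convert hθ.isUnit_map (isFull_of_mul_var (G := A.G) (y := ![1, C (A.x 1)]) fun _ =>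
      eq_zero_of_sum_pair_mul_smul_one_eq_zero (linearIndependent_pair_C A.linearIndependent_pair))
    ext
    simp [v, e]
  have hN : IsUnit (shearMatrix (e ∘ C ∘ A.x) fun j => τ j (v 0)) := by
    have hz : (fun j => τ j (v 0)) = θ ∘ fun j => var 0 + .of (centralPow A.F j) * var 1 :=
      funext fun j => by simp [hτ₀, v, e]
    rw [hz]
    exact shearMatrix_map (.of ∘ C ∘ A.x) _ θ ▸
      hθ.isUnit_map (isFull_shearMatrix A.x_zero A.linearIndependent)
  have hv : v 0 ≠ 0 := fun h => by
    obtain ⟨M', hM'⟩ := hM.exists_right_inv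
    simpa [Matrix.mul_apply, h] using congrFun₂ hM' 0 0
  have hcy (j : Fin (m + 2)) (b) : Commute (centralPow A.F j) (![1, C (A.x 1)] b) := by
    fin_cases b
    exacts [Commute.one_right _, commute_centralPow_C j _]
  let w : Qˣ := (Units.mk0 _ hv)⁻¹
  refine ⟨A.twist (e.comp C) w (fixedSubfield τ) fun _ =>
      eq_zero_of_sum_fixedSubfield_mul_inv_mul_eq_zero (x := C ∘ A.x) hτe hN hv,
    homTwist _ (fun g => mem_fixedSubfield.2 fun j => hτe j _) fun g => ?_, fun f => ?_⟩
  · have := (commute_var_of_smul_one 0 (E := A.F⸨X⸩) (J := Fin 2) g).map θ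
    rw [smul_one_eq_C] at this
    exact this.inv_left₀
  · obtain ⟨u, hu⟩ := exists_fixedSubfield_sum_mul_eq hτe hτ₀ hτ₁ hM hcy
      fun j => commute_centralPow_C j f
    refine ⟨u 0, u 1, ?_⟩
    change (v 0)⁻¹ * e (C f) * v 0 = u 0 * 1 + (v 0)⁻¹ * e (C (A.x 1)) * v 0 * (u 1 * 1)
    rw [mul_assoc, ← hu, Fin.sum_univ_two, mul_add]
    simp [← mul_assoc, hv]

section SeqLimit

variable {K : ℕ → Type*} [∀ n, Ring (K n)]

/-- The composite `K i → K (i + 1) → ⋯ → K j` of ring homomorphisms `s n : K n →+* K (n + 1)`. -/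
def leRecHom (s : ∀ n, K n →+* K (n + 1)) {i j : ℕ} (h : i ≤ j) : K i →+* K j :=
  Nat.leRec (motive := fun j _ => K i →+* K j) (RingHom.id _) (fun k _ f => (s k).comp f) h

theorem leRecHom_self (s : ∀ n, K n →+* K (n + 1)) (i : ℕ) :
    leRecHom s le_rfl = RingHom.id (K i) :=
  Nat.leRec_self _ _

theorem leRecHom_succ (s : ∀ n, K n →+* K (n + 1)) {i j : ℕ} (h : i ≤ j) :
    leRecHom s (Nat.le_succ_of_le h) = (s j).comp (leRecHom s h) :=
  Nat.leRec_succ _ _ _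

theorem leRecHom_leRecHom (s : ∀ n, K n →+* K (n + 1)) {i j k : ℕ} (hij : i ≤ j) (hjk : j ≤ k)
    (x : K i) : leRecHom s hjk (leRecHom s hij x) = leRecHom s (hij.trans hjk) x := by
  induction k, hjk using Nat.le_induction with
  | base => simp [leRecHom_self]
  | succ k hjk ih => simp [leRecHom_succ s hjk, leRecHom_succ s (hij.trans hjk), ih]

instance directedSystem_leRecHom (s : ∀ n, K n →+* K (n + 1)) :
    DirectedSystem K fun _ _ h => leRecHom s h where
  map_self i x := by simp [leRecHom_self]
  map_map _ _ _ hij hjk x := leRecHom_leRecHom s hij hjk x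

/-- The direct limit of the sequence `K 0 → K 1 → K 2 → ⋯` of rings. -/
abbrev SeqLimit (s : ∀ n, K n →+* K (n + 1)) : Type _ :=
  DirectLimit K fun _ _ h => leRecHom s h

namespace SeqLimit

variable {s : ∀ n, K n →+* K (n + 1)}

variable (s) in
/-- The canonical map from a term of a sequence of rings to its direct limit. -/
noncomputable def of (n : ℕ) : K n →+* SeqLimit s := DirectLimit.Ring.of K _ n

theorem of_leRecHom {i j : ℕ} (h : i ≤ j) (x : K i) : of s j (leRecHom s h x) = of s i x :=
  DirectLimit.Ring.of_f _ _

@[simp]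
theorem of_succ (n : ℕ) (x : K n) : of s (n + 1) (s n x) = of s n x := by
  rw [← of_leRecHom n.le_succ, leRecHom_succ s le_rfl, leRecHom_self, RingHom.comp_id]

theorem exists_of (y : SeqLimit s) : ∃ n x, of s n x = y :=
  let ⟨n, x, h⟩ := DirectLimit.exists_eq_mk _ y
  ⟨n, x, h.symm⟩

theorem exists_of_comp {κ : Type*} [Finite κ] (y : κ → SeqLimit s) :
    ∃ n, ∃ x : κ → K n, of s n ∘ x = y := by
  cases nonempty_fintype κ
  choose n x hx using fun k => exists_of (y k)
  have hn (k : κ) : n k ≤ Finset.univ.sup n := Finset.le_sup (Finset.mem_univ k)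
  exact ⟨_, fun k => leRecHom s (hn k) (x k), funext fun k => (of_leRecHom _ _).trans (hx k)⟩

section lift

variable {P : Type*} [Ring P] (g : ∀ n, K n →+* P) (hg : ∀ n, (g (n + 1)).comp (s n) = g n)

/-- The ring homomorphism from a sequential direct limit induced by a compatible family. -/
noncomputable def lift : SeqLimit s →+* P :=
  DirectLimit.Ring.lift K _ P g fun i j hij x => by
    induction j, hij using Nat.le_induction with
    | base => simp [leRecHom_self]
    | succ j hij ih => rw [leRecHom_succ s hij, ← ih, ← hg j]; rfl

@[simp]
theorem lift_of (n : ℕ) (x : K n) : lift g hg (of s n x) = g n x := rfl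

end lift

end SeqLimit

end SeqLimit

namespace Frame

section limit

variable {m : ℕ} (S : ℕ → Frame.{u} m) (h : ∀ n, Hom (S n) (S (n + 1)))

/-- The embedding of the limit of the scalars of a sequence of frames into the limit of the ambient
division rings. -/
noncomputable def limitScalarHom :
    SeqLimit (fun n => (h n).toG) →+* SeqLimit fun n => (h n).toF :=
  SeqLimit.lift (fun n => (SeqLimit.of _ n).comp RingHom.smulOneHom) fun n => by
    ext g
    have hg : (h n).toG g • (1 : (S (n + 1)).F) = (h n).toF (g • 1) := by simp [(h n).map_smul]
    simp [hg]

theorem limitScalarHom_of_mul_of (n : ℕ) (g : (S n).G) (f : (S n).F) :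
    limitScalarHom S h (SeqLimit.of _ n g) * SeqLimit.of _ n f = SeqLimit.of _ n (g • f) := by
  rw [limitScalarHom, SeqLimit.lift_of, ← smul_one_mul g f, map_mul]
  rfl

theorem of_x (n : ℕ) (k : Fin (m + 2)) :
    SeqLimit.of (fun n => (h n).toF) n ((S n).x k) = SeqLimit.of _ 0 ((S 0).x k) := by
  induction n with
  | zero => rfl
  | succ n ih => rw [← ih, ← (h n).map_x, SeqLimit.of_succ (s := fun n => (h n).toF)]

/-- The direct limit of a sequence of frames. -/
noncomputable def limit : Frame.{u} m :=
  letI := Module.compHom (SeqLimit fun n => (h n).toF) (limitScalarHom S h)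
  haveI : IsScalarTower (SeqLimit fun n => (h n).toG) (SeqLimit fun n => (h n).toF)
    (SeqLimit fun n => (h n).toF) := ⟨fun _ _ _ => mul_assoc _ _ _⟩
  { F := SeqLimit fun n => (h n).toF
    G := SeqLimit fun n => (h n).toG
    x := fun k => SeqLimit.of _ 0 ((S 0).x k)
    x_zero := by rw [(S 0).x_zero, map_one]
    linearIndependent := Fintype.linearIndependent_iff.2 fun g hg => by
      obtain ⟨n, y, rfl⟩ := SeqLimit.exists_of_comp g
      have hsum : SeqLimit.of (fun n => (h n).toF) n (∑ k, y k • (S n).x k) = 0 := by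
        rw [← hg, map_sum]
        exact Finset.sum_congr rfl fun k _ => by
          rw [← limitScalarHom_of_mul_of, of_x]
          rfl
      have hy := Fintype.linearIndependent_iff.1 (S n).linearIndependent y
        ((map_eq_zero _).1 hsum)
      exact fun k => by simp [hy] }

/-- The canonical morphism from a term of a sequence of frames to its direct limit. -/
noncomputable def toLimit (n : ℕ) : Hom (S n) (limit S h) where
  toF := SeqLimit.of (fun n => (h n).toF) n
  toG := SeqLimit.of (fun n => (h n).toG) n
  map_smul g f := (limitScalarHom_of_mul_of S h n g f).symm
  map_x := of_x S h n

theorem exists_toLimit_succ_toF (f : (limit S h).F) :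
    ∃ n y, (toLimit S h (n + 1)).toF ((h n).toF y) = f :=
  let ⟨n, y, hy⟩ := SeqLimit.exists_of (s := fun n => (h n).toF) f
  ⟨n, y, (SeqLimit.of_succ (s := fun n => (h n).toF) n y).trans hy⟩

end limit

variable {m : ℕ} {A B : Frame.{u} m}

theorem Hom.mem_span (h : Hom A B) {f : A.F} (hf : f ∈ Submodule.span A.G (Set.range A.x)) :
    h.toF f ∈ Submodule.span B.G (Set.range B.x) := by
  obtain ⟨g, rfl⟩ := (Submodule.mem_span_range_iff_exists_fun _).1 hf
  refine (Submodule.mem_span_range_iff_exists_fun _).2 ⟨h.toG ∘ g, ?_⟩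
  simp [h.map_smul, h.map_x]

theorem Hom.eq_smul_one_add (h : Hom A B) {f : A.F}
    (hf : ∃ s t : A.G, f = s • 1 + A.x 1 * t • 1) :
    ∃ s t : B.G, h.toF f = s • 1 + B.x 1 * t • 1 := by
  obtain ⟨s, t, rfl⟩ := hf
  exact ⟨h.toG s, h.toG t, by simp [h.map_smul, h.map_x]⟩

theorem exists_hom_mem_span_and_eq_smul_one_add (A : Frame.{u} m) :
    ∃ (B : Frame.{u} m) (h : Hom A B), ∀ f, h.toF f ∈ Submodule.span B.G (Set.range B.x) ∧
      ∃ s t : B.G, h.toF f = s • 1 + B.x 1 * t • 1 := by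
  obtain ⟨B, h, hB⟩ := exists_hom_mem_span A
  obtain ⟨C, k, hC⟩ := exists_hom_eq_smul_one_add B
  exact ⟨C, k.comp h, fun f => ⟨k.mem_span (hB f), hC _⟩⟩

theorem exists_hom_forall_mem_span_and_eq_smul_one_add (A : Frame.{u} m) :
    ∃ (B : Frame.{u} m) (_ : Hom A B), ∀ f : B.F, f ∈ Submodule.span B.G (Set.range B.x) ∧
      ∃ s t : B.G, f = s • 1 + B.x 1 * t • 1 := by
  choose N H hH using fun A : Frame.{u} m => exists_hom_mem_span_and_eq_smul_one_add A
  let S (n : ℕ) : Frame.{u} m := Nat.rec A (fun _ B => N B) n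
  let h (n : ℕ) : Hom (S n) (S (n + 1)) := H (S n)
  refine ⟨limit S h, toLimit S h 0, fun f => ?_⟩
  obtain ⟨n, y, rfl⟩ := exists_toLimit_succ_toF S h f
  obtain ⟨hspan, hpair⟩ := hH (S n) y
  exact ⟨(toLimit S h (n + 1)).mem_span hspan, (toLimit S h (n + 1)).eq_smul_one_add hpair⟩

end Frame

section RightRegular

variable {κ F G : Type*} [Fintype κ] [DecidableEq κ] [Semiring F] [Semiring G] [Module G F]
  [IsScalarTower G F F]

/-- The matrices of the right multiplications of `F` in a left `G`-basis `b`: the `r`-th row of the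
matrix of `f` consists of the coordinates of `b r * f`. -/
noncomputable def rightRegularRepr (b : Module.Basis κ G F) : F →+* Matrix κ κ G where
  toFun f := Matrix.of fun r => b.repr (b r * f)
  map_one' := by
    ext r k
    simp [Matrix.one_apply, Finsupp.single_apply]
  map_zero' := by
    ext
    simp
  map_add' f f' := by
    ext
    simp [mul_add]
  map_mul' f f' := by
    ext r k
    have h : b r * (f * f') = ∑ j, b.repr (b r * f) j • (b j * f') := by
      simp_rw [← mul_assoc, ← smul_mul_assoc, ← Finset.sum_mul, b.sum_repr]
    simp [h, Matrix.mul_apply]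

theorem rightRegularRepr_apply (b : Module.Basis κ G F) (f : F) (r : κ) :
    rightRegularRepr b f r = b.equivFun (b r * f) := rfl

theorem rightRegularRepr_apply_eq_iff {b : Module.Basis κ G F} {f : F} {r : κ} {g : κ → G} :
    rightRegularRepr b f r = g ↔ b r * f = ∑ k, g k • b k := by
  rw [rightRegularRepr_apply, ← LinearEquiv.eq_symm_apply, b.equivFun_symm_apply]

theorem rightRegularRepr_map {F' G' : Type*} [Semiring F'] [Semiring G']
    [Module G' F'] [IsScalarTower G' F' F'] {b : Module.Basis κ G F} {b' : Module.Basis κ G' F'}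
    (hF : F →+* F') (hG : G →+* G') (hsmul : ∀ g f, hF (g • f) = hG g • hF f)
    (hb : ∀ k, hF (b k) = b' k) (f : F) :
    rightRegularRepr b' (hF f) = (rightRegularRepr b f).map hG := by
  funext r
  refine rightRegularRepr_apply_eq_iff.2 ?_
  rw [← hb, ← map_mul, rightRegularRepr_apply_eq_iff.1 rfl, map_sum]
  simp [hsmul, hb]

end RightRegular

section Tight

variable {m : ℕ} {F G : Type*} [Ring F] [Ring G] [Module G F] [IsScalarTower G F F]
  {b : Module.Basis (Fin (m + 2)) G F}

theorem aTight_one_rightRegularRepr (h0 : b 0 = 1) : ATight (rightRegularRepr b) 1 := by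
  refine fun g => ⟨∑ k, g 0 k • b k, fun i j hi _ => ?_⟩
  obtain rfl : i = 0 := Fin.ext (by simpa using hi)
  rw [rightRegularRepr_apply_eq_iff.2 (by rw [h0, one_mul])]

theorem aTight_two_rightRegularRepr (h0 : b 0 = 1)
    (h : ∀ f : F, ∃ s t : G, f = s • 1 + b 1 * t • 1) : ATight (rightRegularRepr b) 2 := by
  intro g
  let u (r : Fin (m + 2)) : F := ∑ k : Fin (m + 1), g r k.succ • b k.succ
  -- `u 0` has the right entries in row `0` off column `0`, and adding `t • 1` does not affect them;
  -- `t` is chosen so that `b 1 * (u 0 + t • 1)` differs from `u 1` by a multiple of `1` only.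
  obtain ⟨s, t, hst⟩ := h (u 1 - b 1 * u 0)
  have hrow₀ : rightRegularRepr b (u 0 + t • 1) 0 = Fin.cons t fun k => g 0 k.succ := by
    refine rightRegularRepr_apply_eq_iff.2 ?_
    simp [Fin.sum_univ_succ (n := m + 1), h0, u, add_comm]
  have hrow₁ : rightRegularRepr b (u 0 + t • 1) 1 = Fin.cons (-s) fun k => g 1 k.succ := by
    refine rightRegularRepr_apply_eq_iff.2 ?_
    rw [Fin.sum_univ_succ, mul_add, ← sub_eq_iff_eq_add'.2 hst]
    simp only [Fin.cons_zero, Fin.cons_succ, h0, neg_smul, u]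
    abel
  refine ⟨u 0 + t • 1, fun i j hi hj => ?_⟩
  obtain ⟨k, rfl⟩ := Fin.exists_succ_eq.2 (show j ≠ 0 from fun h => by simp [h] at hj)
  obtain rfl | rfl : i = 0 ∨ i = 1 := by
    simp only [Fin.ext_iff, Fin.val_zero, Fin.val_one]
    omega
  · rw [hrow₀, Fin.cons_succ]
  · rw [hrow₁, Fin.cons_succ]

end Tight

namespace ATight

variable {m : ℕ} {F G : Type*} [DivisionRing F] [DivisionRing G]
  {φ : F →+* Matrix (Fin (m + 1)) (Fin (m + 1)) G}

theorem bijective_row_zero (h : ATight φ 1) : Function.Bijective fun f => φ f 0 := by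
  refine ⟨fun f f' hff => ?_, fun g => ?_⟩
  · by_contra hne
    have hone := congrFun₂ (map_mul φ (f - f') (f - f')⁻¹) 0 0
    rw [mul_inv_cancel₀ (sub_ne_zero.2 hne), map_sub, Matrix.mul_apply] at hone
    simp [congrFun hff] at hone
  · obtain ⟨f, hf⟩ := h (Matrix.of fun _ => g)
    exact ⟨f, funext fun k => hf 0 k (by simp) (by simp)⟩

/-- The identification of `F` with the space of row vectors over `G` given by the first rows of the
matrices of a `1`-tight representation. -/
noncomputable def rowEquiv (h : ATight φ 1) : F ≃+ (Fin (m + 1) → G) where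
  __ := Equiv.ofBijective _ h.bijective_row_zero
  map_add' f f' := congrFun (map_add φ f f') 0

theorem rowEquiv_one (h : ATight φ 1) : h.rowEquiv 1 = Pi.single 0 1 :=
  (congrFun (map_one φ) 0).trans (funext fun _ => Matrix.one_eq_pi_single)

theorem rowEquiv_mul (h : ATight φ 1) (f f' : F) :
    h.rowEquiv (f * f') = h.rowEquiv f ᵥ* φ f' :=
  congrFun (map_mul φ f f') 0

theorem exists_rightRegularRepr_eq (h : ATight φ 1) :
    ∃ (_ : Module G F) (_ : IsScalarTower G F F) (b : Module.Basis (Fin (m + 1)) G F),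
      b 0 = 1 ∧ rightRegularRepr b = φ := by
  let : Module G F := h.rowEquiv.module G
  let e : F ≃ₗ[G] (Fin (m + 1) → G) := h.rowEquiv.linearEquiv G
  have e_mul (f f' : F) : e (f * f') = e f ᵥ* φ f' := h.rowEquiv_mul f f'
  have : IsScalarTower G F F :=
    ⟨fun g f f' => e.injective (by simp [e_mul, Matrix.smul_vecMul])⟩
  let b : Module.Basis (Fin (m + 1)) G F := .ofEquivFun e
  have e_b (k) : e (b k) = Pi.single k 1 := by simp [b]
  refine ⟨_, this, b, e.injective ((e_b 0).trans h.rowEquiv_one.symm),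
    RingHom.ext fun f => funext fun r => ?_⟩
  change e (b r * f) = φ f r
  rw [e_mul, e_b, Matrix.single_one_vecMul]
  rfl

end ATight

/-- Every `1`-tight embedding of division rings `F → Mₙ(G)` (`n ≥ 2`) extends to an
embedding `F′ → Mₙ(G′)` which is both `1`-tight and `2`-tight. -/
theorem stmt6 (n : ℕ) (hn : 2 ≤ n) (F G : Type) [DivisionRing F] [DivisionRing G]
    (φ : F →+* Matrix (Fin n) (Fin n) G) (hinj : Function.Injective φ)
    (h1 : ATight (⇑φ) 1) :
    ∃ E : EmbExtension n F G φ, ATight (⇑E.φ') 1 ∧ ATight (⇑E.φ') 2 := by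
  obtain ⟨m, rfl⟩ := Nat.exists_eq_add_of_le' hn
  obtain ⟨_, _, b, hb, rfl⟩ := h1.exists_rightRegularRepr_eq
  let A : Frame m := ⟨F, G, b, hb, b.linearIndependent⟩
  obtain ⟨B, h, hB⟩ := A.exists_hom_forall_mem_span_and_eq_smul_one_add
  let b' := Module.Basis.mk B.linearIndependent fun f _ => (hB f).1
  have hb' : b' 0 = 1 := by rw [Module.Basis.mk_apply, B.x_zero]
  refine ⟨{
    F' := B.F
    G' := B.G
    ιF := h.toF
    ιG := h.toG
    injF := h.toF.injective
    injG := h.toG.injective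
    φ' := rightRegularRepr b'
    injφ' := (rightRegularRepr b').injective
    compat := rightRegularRepr_map h.toF h.toG h.map_smul fun k => by
      rw [Module.Basis.mk_apply]
      exact h.map_x k }, aTight_one_rightRegularRepr hb',
    aTight_two_rightRegularRepr hb' fun f => ?_⟩
  simpa [b'] using (hB f).2
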